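/- arXiv:2308.02956 — 3 statements merged into one kernel-verified Lean document; each statement's English description precedes it below -/
import Mathlib

section
/- Let K and L be convex bodies in ℝⁿ with n ≥ 3 and L contained in the interior of K. Suppose that for every unit vector u ∈ Sⁿ⁻¹ there is a number λ(u) such that every chord of K parallel to u whose line supports L has length λ(u). Then for every point x ∈ ∂L and every supporting hyperplane H of L with x ∈ H, the section H ∩ K is centrally symmetric with center of symmetry x (i.e., H ∩ K = 2x − (H ∩ K)). -/
/-!
The proof has two steps. Let `H` be a hyperplane supporting `L` at `x`.

*Every chord of `H ∩ K` through `x` is a longest chord of `H ∩ K` in its direction*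
(`chord_le`). Fix a direction `u` of `H`. The length of the chords of `K` parallel to `u` is a concave
function of the position of the line, and it equals `lam u` on all lines that support `L`. If a line
in `H` carried a longer chord, then moving that line through the interior of `L` to the far side would
meet two supporting lines of `L`, and concavity would make the first chord longer than `lam u`.

*A convex body `M` of dimension at least `2`, all of whose chords through the interior point `0` are
longest in their directions, satisfies `M = -M`* (`neg_mem_of_fit`). Let `g` be the gauge of `M`. A
longest chord has parallel supporting hyperplanes at its two ends (`exists_common_support`), which
means that the convex functions `g(v)` and `g(-v)` have a common logarithmic subgradient at each
`v ≠ 0`. So their ratio is constant on segments avoiding the origin (`ratio_eq`, `gauge_ratio_eq`). For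
`v ≠ 0` and `e` independent of `v` the ratio is therefore the same at `v`, `e` and `-v`. Being replaced
by its reciprocal when `v` becomes `-v`, it equals `1`.

The second step is applied to `M = (H ∩ K) - x` in `wᗮ`, where `w` is the normal of `H`; its dimension
`n - 1` is at least `2`.
-/

open Metric Set
open scoped RealInnerProductSpace

noncomputable section

/-- The line through `a` with direction `u`. -/
def lineThrough {n : ℕ} (a u : EuclideanSpace ℝ (Fin n)) : Set (EuclideanSpace ℝ (Fin n)) :=
  {x | ∃ t : ℝ, x = a + t • u}

/-- The line through `a` with direction `u` supports `L`: it meets `L`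
but is disjoint from the interior of `L`. -/
def LineSupports {n : ℕ} (L : Set (EuclideanSpace ℝ (Fin n)))
    (a u : EuclideanSpace ℝ (Fin n)) : Prop :=
  (lineThrough a u ∩ L).Nonempty ∧ lineThrough a u ∩ interior L = ∅

/-! ### Two functions with a common logarithmic subgradient -/

/-- One step of the subdivision in `ratio_eq`: `a, a'` and `b, b'` are the values of `G` and `H` at
the two ends of an interval of length `e`, and `k, k'` the common logarithmic subgradients. The
right-hand side has the increment of the subgradient `k b` of `H` as a factor, so that it
telescopes. -/
lemma ratio_step {a b a' b' k k' e C c : ℝ} (hc : 0 < c)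
    (ha : 0 ≤ a) (ha' : 0 ≤ a') (haC : a ≤ C) (haC' : a' ≤ C) (hb : c ≤ b) (hb' : c ≤ b')
    (h1 : a * (1 + k * e) ≤ a') (h2 : b * (1 + k * e) ≤ b')
    (h3 : a' * (1 - k' * e) ≤ a) (h4 : b' * (1 - k' * e) ≤ b) :
    |a' / b' - a / b| ≤ C / c ^ 2 * e * (k' * b' - k * b) := by
  have hb0 : 0 < b := hc.trans_le hb
  have hb0' : 0 < b' := hc.trans_le hb'
  have hC : 0 ≤ C := ha.trans haC
  have hm : 0 ≤ e * (k' * b' - k * b) := by nlinarith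
  have hbb : c ^ 2 ≤ b' * b := by nlinarith
  have hU : a' * b - b' * a ≤ C * (e * (k' * b' - k * b)) := by
    have : a' * b - b' * a ≤ a' * (e * (k' * b' - k * b)) := by nlinarith
    nlinarith
  have hL : -(a' * b - b' * a) ≤ C * (e * (k' * b' - k * b)) := by
    have : -(a' * b - b' * a) ≤ a * (e * (k' * b' - k * b)) := by nlinarith
    nlinarith
  have habs : |a' * b - b' * a| ≤ C * (e * (k' * b' - k * b)) := abs_le.2 ⟨by linarith, hU⟩
  rw [div_sub_div _ _ hb0'.ne' hb0.ne', abs_div, abs_of_pos (mul_pos hb0' hb0)]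
  calc |a' * b - b' * a| / (b' * b) ≤ C * (e * (k' * b' - k * b)) / c ^ 2 := by
        gcongr
    _ = _ := by ring

/-- If at every point `G` and `H` have a common logarithmic subgradient `κ`, then `G / H` takes equal
values at `0` and `1`: over a subdivision into `N` equal parts the increments of `G / H` add up to
at most a constant times `(κ 1 * H 1 - κ 0 * H 0) / N`. -/
lemma ratio_eq {G H κ : ℝ → ℝ} {C c : ℝ} (hc : 0 < c)
    (hG0 : ∀ τ ∈ Icc (0 : ℝ) 1, 0 ≤ G τ) (hGC : ∀ τ ∈ Icc (0 : ℝ) 1, G τ ≤ C)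
    (hH : ∀ τ ∈ Icc (0 : ℝ) 1, c ≤ H τ)
    (hsG : ∀ τ ∈ Icc (0 : ℝ) 1, ∀ σ ∈ Icc (0 : ℝ) 1, G τ * (1 + κ τ * (σ - τ)) ≤ G σ)
    (hsH : ∀ τ ∈ Icc (0 : ℝ) 1, ∀ σ ∈ Icc (0 : ℝ) 1, H τ * (1 + κ τ * (σ - τ)) ≤ H σ) :
    G 1 / H 1 = G 0 / H 0 := by
  set m : ℝ → ℝ := fun τ => κ τ * H τ
  have key : ∀ N : ℕ, 0 < N → |G 1 / H 1 - G 0 / H 0| ≤ C / c ^ 2 * (1 / N) * (m 1 - m 0) := by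
    intro N hN
    have hN' : (0 : ℝ) < N := by exact_mod_cast hN
    have tele : G 1 / H 1 - G 0 / H 0 = ∑ i ∈ Finset.range N,
        (G ((i + 1 : ℕ) / N) / H ((i + 1 : ℕ) / N) - G ((i : ℕ) / N) / H ((i : ℕ) / N)) := by
      rw [Finset.sum_range_sub (fun i : ℕ => G ((i : ℕ) / N) / H ((i : ℕ) / N))]
      simp [hN'.ne']
    have tele' : m 1 - m 0 = ∑ i ∈ Finset.range N,
        (m ((i + 1 : ℕ) / N) - m ((i : ℕ) / N)) := by
      rw [Finset.sum_range_sub (fun i : ℕ => m ((i : ℕ) / N))]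
      simp [hN'.ne']
    rw [tele, tele', Finset.mul_sum]
    refine (Finset.abs_sum_le_sum_abs _ _).trans (Finset.sum_le_sum fun i hi => ?_)
    have hi : i + 1 ≤ N := Finset.mem_range.1 hi
    have hi' : ((i + 1 : ℕ) : ℝ) ≤ N := by exact_mod_cast hi
    have m1 : ((i + 1 : ℕ) / N : ℝ) ∈ Icc (0 : ℝ) 1 :=
      ⟨by positivity, (div_le_one hN').2 hi'⟩
    have m0 : ((i : ℕ) / N : ℝ) ∈ Icc (0 : ℝ) 1 :=
      ⟨by positivity, (div_le_one hN').2 (by push_cast at hi'; linarith)⟩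
    have hd : ((i + 1 : ℕ) / N : ℝ) - (i : ℕ) / N = 1 / N := by push_cast; ring
    have hd' : ((i : ℕ) / N : ℝ) - (i + 1 : ℕ) / N = -(1 / N) := by rw [← hd]; ring
    have h1 := hsG _ m0 _ m1
    have h2 := hsH _ m0 _ m1
    have h3 := hsG _ m1 _ m0
    have h4 := hsH _ m1 _ m0
    rw [hd] at h1 h2
    rw [hd', mul_neg, ← sub_eq_add_neg] at h3 h4
    exact ratio_step hc (hG0 _ m0) (hG0 _ m1) (hGC _ m0) (hGC _ m1)
      (hH _ m0) (hH _ m1) h1 h2 h3 h4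
  by_contra hne
  have hpos : 0 < |G 1 / H 1 - G 0 / H 0| := abs_pos.2 (sub_ne_zero.2 hne)
  obtain ⟨N, hN⟩ := exists_nat_gt (C / c ^ 2 * (m 1 - m 0) / |G 1 / H 1 - G 0 / H 0|)
  have hk := key (N + 1) N.succ_pos
  rw [div_lt_iff₀ hpos] at hN
  have hN1 : (0 : ℝ) < (N + 1 : ℕ) := by positivity
  have : |G 1 / H 1 - G 0 / H 0| * (N + 1 : ℕ) ≤ C / c ^ 2 * (m 1 - m 0) := by
    calc _ ≤ (C / c ^ 2 * (1 / (N + 1 : ℕ)) * (m 1 - m 0)) * (N + 1 : ℕ) := by gcongr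
      _ = _ := by field_simp
  push_cast at this
  nlinarith

/-! ### Bodies whose chords through the origin are longest -/

section
variable {V : Type*} [NormedAddCommGroup V] [NormedSpace ℝ V]

open scoped Pointwise Topology

/-- Parallel supporting hyperplanes at the end points `u / g(u)` and `-u / g(-u)` of the chord of `M`
through `0` in direction `u`, where `g` is the gauge of `M`; they are level sets of the
functional `φ`, normalized by `φ u = 1`.

The hypothesis `hfit` says that every vector `y - z` with `y, z ∈ M` is also a difference of two
points of `M` on a line through `0`, i.e. that every chord of `M` through `0` is a longest one in
its direction. Hence `D u`, with `D = 1 / g(u) + 1 / g(-u)`, does not lie in the open convex set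
`interior M - interior M`, and a separating functional is the required one. -/
lemma exists_common_support {M : Set V} (hconv : Convex ℝ M) (hcl : IsClosed M)
    (hbd : Bornology.IsBounded M) (h0 : M ∈ 𝓝 (0 : V))
    (hfit : ∀ y ∈ M, ∀ z ∈ M, ∃ α : ℝ, α • (y - z) ∈ M ∧ (α - 1) • (y - z) ∈ M)
    {u : V} (hu : u ≠ 0) :
    ∃ φ : V →ₗ[ℝ] ℝ, φ u = 1 ∧ ∀ v, gauge M u * φ v ≤ gauge M v ∧
      gauge M (-u) * φ v ≤ gauge M (-v) := by
  have habs : Absorbent ℝ M := absorbent_nhds_zero h0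
  have hvb : Bornology.IsVonNBounded ℝ M := NormedSpace.isVonNBounded_of_isBounded ℝ hbd
  have hgu : 0 < gauge M u := (gauge_pos habs hvb).2 hu
  have hgu' : 0 < gauge M (-u) := (gauge_pos habs hvb).2 (neg_ne_zero.2 hu)
  have hmem : ∀ v, gauge M v ≤ 1 ↔ v ∈ M := fun v => by
    rw [gauge_le_one_iff_mem_closure hconv h0, hcl.closure_eq]
  have hhom : ∀ (r : ℝ) (v : V), 0 ≤ r → gauge M (r • v) = r * gauge M v := fun r v hr => by
    rw [gauge_smul_of_nonneg hr, smul_eq_mul]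
  set D : ℝ := (gauge M u)⁻¹ + (gauge M (-u))⁻¹ with hD
  have hDpos : 0 < D := by positivity
  have hbound : ∀ y ∈ M, ∀ z ∈ M, ∀ c : ℝ, 0 < c → y - z = c • u → c ≤ D := by
    intro y hy z hz c hc hyz
    obtain ⟨α, h1, h2⟩ := hfit y hy z hz
    rw [hyz, smul_smul] at h1 h2
    have e1 : α * c ≤ (gauge M u)⁻¹ := by
      rcases le_total 0 (α * c) with h | h
      · rw [← hmem, hhom _ _ h] at h1
        rwa [← one_div, le_div_iff₀ hgu]
      · exact h.trans (by positivity)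
    have e2 : (1 - α) * c ≤ (gauge M (-u))⁻¹ := by
      rcases le_total 0 ((1 - α) * c) with h | h
      · have : ((α - 1) * c) • u = ((1 - α) * c) • (-u) := by rw [smul_neg, ← neg_smul]; ring_nf
        rw [this, ← hmem, hhom _ _ h] at h2
        rwa [← one_div, le_div_iff₀ hgu']
      · exact h.trans (by positivity)
    rw [hD]; linarith
  have hnot : D • u ∉ interior M - interior M := by
    rintro ⟨a, ha, b, hb, hab⟩
    rw [← gauge_lt_one_iff_mem_interior hconv h0] at ha hb
    obtain ⟨r, hr, hr1⟩ := exists_between (max_lt (max_lt ha hb) one_pos)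
    simp only [max_lt_iff] at hr
    obtain ⟨⟨hra, hrb⟩, hr0⟩ := hr
    have hin : ∀ v, gauge M v < r → r⁻¹ • v ∈ M := fun v hv => by
      rw [← hmem, hhom _ _ (by positivity), inv_mul_le_iff₀ hr0]; linarith
    have := hbound _ (hin a hra) _ (hin b hrb) (r⁻¹ * D) (by positivity) (by
      rw [← smul_sub, mul_smul, ← hab])
    rw [inv_mul_le_iff₀ hr0] at this
    nlinarith
  obtain ⟨f, hf⟩ := geometric_hahn_banach_open_point
    (hconv.interior.sub hconv.interior) (isOpen_interior.sub_right) hnot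
  have h0i : (0 : V) ∈ interior M := mem_interior_iff_mem_nhds.2 h0
  have hfu : 0 < f u := by
    have := hf 0 ⟨0, h0i, 0, h0i, by simp⟩
    rw [map_zero, map_smul, smul_eq_mul] at this
    exact pos_of_mul_pos_right this hDpos.le
  -- The bound on `interior M` extends to `M`, since `r • M ⊆ interior M` for `0 < r < 1`.
  have hle : ∀ y ∈ M, ∀ z ∈ M, f y - f z ≤ D * f u := by
    intro y hy z hz
    by_contra! hlt
    have hpos : 0 < D * f u := by positivity
    obtain ⟨r, hr0, hr1⟩ := exists_between ((div_lt_one (hpos.trans hlt)).2 hlt)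
    have hr : 0 < r := (div_pos hpos (hpos.trans hlt)).trans hr0
    have hin : ∀ v ∈ M, r • v ∈ interior M := fun v hv => by
      rw [← gauge_lt_one_iff_mem_interior hconv h0, hhom _ _ hr.le]
      have := (hmem v).2 hv
      nlinarith
    have := hf _ ⟨_, hin y hy, _, hin z hz, rfl⟩
    simp only [map_sub, map_smul, smul_eq_mul] at this
    rw [div_lt_iff₀ (hpos.trans hlt)] at hr0
    linarith
  have hunit : ∀ v, v ≠ 0 → (gauge M v)⁻¹ • v ∈ M := fun v hv => by
    have := (gauge_pos habs hvb).2 hv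
    rw [← hmem, hhom _ _ (by positivity), inv_mul_cancel₀ this.ne']
  refine ⟨(f u)⁻¹ • f.toLinearMap, by simp [hfu.ne'], fun v => ?_⟩
  rcases eq_or_ne v 0 with rfl | hv
  · simp
  have hgv : 0 < gauge M v := (gauge_pos habs hvb).2 hv
  have hgv' : 0 < gauge M (-v) := (gauge_pos habs hvb).2 (neg_ne_zero.2 hv)
  have a1 := hle _ (hunit v hv) _ (hunit (-u) (neg_ne_zero.2 hu))
  have a2 := hle _ (hunit u hu) _ (hunit (-v) (neg_ne_zero.2 hv))
  simp only [map_smul, map_neg, smul_eq_mul] at a1 a2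
  rw [hD] at a1 a2
  have b1 : (gauge M v)⁻¹ * f v ≤ (gauge M u)⁻¹ * f u := by linarith
  have b2 : (gauge M (-v))⁻¹ * f v ≤ (gauge M (-u))⁻¹ * f u := by linarith
  simp only [LinearMap.smul_apply, smul_eq_mul, ContinuousLinearMap.coe_coe]
  constructor
  · rw [inv_mul_le_iff₀ hgv] at b1
    calc gauge M u * ((f u)⁻¹ * f v)
        ≤ gauge M u * ((f u)⁻¹ * (gauge M v * ((gauge M u)⁻¹ * f u))) := by gcongr
      _ = gauge M v := by field_simp
  · rw [inv_mul_le_iff₀ hgv'] at b2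
    calc gauge M (-u) * ((f u)⁻¹ * f v)
        ≤ gauge M (-u) * ((f u)⁻¹ * (gauge M (-v) * ((gauge M (-u))⁻¹ * f u))) := by gcongr
      _ = gauge M (-v) := by field_simp

/-- The ratio `g(v) / g(-v)` of the gauge of `M` is the same at linearly independent vectors: on the
segment joining them, which avoids `0`, the functions `g(v)` and `g(-v)` have a common logarithmic
subgradient. -/
lemma gauge_ratio_eq {M : Set V} (hconv : Convex ℝ M) (hcl : IsClosed M)
    (hbd : Bornology.IsBounded M) (h0 : M ∈ 𝓝 (0 : V))
    (hfit : ∀ y ∈ M, ∀ z ∈ M, ∃ α : ℝ, α • (y - z) ∈ M ∧ (α - 1) • (y - z) ∈ M)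
    {p p' : V} (hp : LinearIndependent ℝ ![p, p']) :
    gauge M p' / gauge M (-p') = gauge M p / gauge M (-p) := by
  have habs : Absorbent ℝ M := absorbent_nhds_zero h0
  have hvb : Bornology.IsVonNBounded ℝ M := NormedSpace.isVonNBounded_of_isBounded ℝ hbd
  set γ : ℝ → V := fun τ => p + τ • (p' - p) with hγ
  have hγ0 : ∀ τ, γ τ ≠ 0 := by
    intro τ h
    have h' : (1 - τ) • p + τ • p' = 0 := by rw [← h, hγ]; module
    obtain ⟨h1, h2⟩ := LinearIndependent.pair_iff.1 hp _ _ h'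
    linarith
  have hγc : Continuous γ := by fun_prop
  have hgc : Continuous (gauge M) := continuous_gauge hconv h0
  choose φ hφ1 hφ using fun τ => exists_common_support hconv hcl hbd h0 hfit (hγ0 τ)
  have hφγ : ∀ τ σ, φ τ (γ σ) = 1 + φ τ (p' - p) * (σ - τ) := by
    intro τ σ
    have : γ σ = γ τ + (σ - τ) • (p' - p) := by simp only [hγ]; module
    rw [this, map_add, map_smul, hφ1, smul_eq_mul, mul_comm]
  obtain ⟨τ₁, -, hτ₁⟩ := isCompact_Icc.exists_isMaxOn (nonempty_Icc.2 (zero_le_one (α := ℝ)))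
    (hgc.comp hγc).continuousOn
  obtain ⟨τ₂, -, hτ₂⟩ := isCompact_Icc.exists_isMinOn (nonempty_Icc.2 (zero_le_one (α := ℝ)))
    (hgc.comp hγc.neg).continuousOn
  have := ratio_eq (G := fun τ => gauge M (γ τ)) (H := fun τ => gauge M (-γ τ))
    (κ := fun τ => φ τ (p' - p)) (C := gauge M (γ τ₁)) (c := gauge M (-γ τ₂))
    ((gauge_pos habs hvb).2 (neg_ne_zero.2 (hγ0 _))) (fun τ _ => gauge_nonneg _)
    (fun τ hτ => hτ₁ hτ) (fun τ hτ => hτ₂ hτ)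
    (fun τ _ σ _ => by rw [← hφγ]; exact (hφ τ _).1)
    (fun τ _ σ _ => by rw [← hφγ]; exact (hφ τ _).2)
  simpa [hγ] using this

/-- A convex body of dimension at least two is symmetric about `0` if each of its chords through `0`
is a longest one in its direction. With `e` independent of `v`, the ratio `g(v) / g(-v)` agrees
with that at `e`, hence with that at `-v`, its own reciprocal; so `g(v) = g(-v)`. -/
lemma neg_mem_of_fit [FiniteDimensional ℝ V] (hdim : 1 < Module.finrank ℝ V)
    {M : Set V} (hconv : Convex ℝ M) (hcl : IsClosed M)
    (hbd : Bornology.IsBounded M) (h0 : M ∈ 𝓝 (0 : V))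
    (hfit : ∀ y ∈ M, ∀ z ∈ M, ∃ α : ℝ, α • (y - z) ∈ M ∧ (α - 1) • (y - z) ∈ M)
    {v : V} (hv : v ∈ M) : -v ∈ M := by
  rcases eq_or_ne v 0 with rfl | hv0
  · simpa using hv
  have habs : Absorbent ℝ M := absorbent_nhds_zero h0
  have hvb : Bornology.IsVonNBounded ℝ M := NormedSpace.isVonNBounded_of_isBounded ℝ hbd
  have hmem : ∀ v, gauge M v ≤ 1 ↔ v ∈ M := fun v => by
    rw [gauge_le_one_iff_mem_closure hconv h0, hcl.closure_eq]
  obtain ⟨e, he⟩ := exists_linearIndependent_pair_of_one_lt_finrank hdim hv0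
  have he' : LinearIndependent ℝ ![-v, e] := by
    rw [LinearIndependent.pair_iff] at he ⊢
    intro s t h
    have := he (-s) t (by rw [← h]; module)
    exact ⟨by linarith [this.1], this.2⟩
  have e1 := gauge_ratio_eq hconv hcl hbd h0 hfit he
  have e2 := gauge_ratio_eq hconv hcl hbd h0 hfit he'
  rw [e1, neg_neg] at e2
  have g1 : 0 < gauge M v := (gauge_pos habs hvb).2 hv0
  have g2 : 0 < gauge M (-v) := (gauge_pos habs hvb).2 (neg_ne_zero.2 hv0)
  rw [div_eq_div_iff g2.ne' g1.ne', mul_self_eq_mul_self_iff] at e2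
  rw [← hmem] at hv ⊢
  rcases e2 with h | h <;> linarith
end

/-! ### Chords of `K` in a supporting hyperplane of `L` -/

section
variable {n : ℕ} {K L : Set (EuclideanSpace ℝ (Fin n))} {a u w x : EuclideanSpace ℝ (Fin n)}

lemma sub_le_diam_chord (hK : IsCompact K) (hu : ‖u‖ = 1) {α β : ℝ}
    (hα : a + α • u ∈ K) (hβ : a + β • u ∈ K) : α - β ≤ diam (K ∩ lineThrough a u) := by
  have := dist_le_diam_of_mem (hK.isBounded.subset inter_subset_left)
    (⟨hα, α, rfl⟩ : _ ∈ K ∩ lineThrough a u) (⟨hβ, β, rfl⟩ : _ ∈ K ∩ lineThrough a u)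
  rw [dist_add_left, dist_eq_norm, ← sub_smul, norm_smul, hu, mul_one] at this
  exact (le_abs_self _).trans this

lemma isClosed_lineThrough (a u : EuclideanSpace ℝ (Fin n)) : IsClosed (lineThrough a u) := by
  have : lineThrough a u = (fun v => v - a) ⁻¹' (Submodule.span ℝ {u} : Set _) := by
    ext v
    simp only [lineThrough, mem_ofPred_eq, mem_preimage, SetLike.mem_coe,
      Submodule.mem_span_singleton]
    exact exists_congr fun t => by rw [eq_sub_iff_add_eq', eq_comm]
  rw [this]
  exact (Submodule.closed_of_finiteDimensional _).preimage (by fun_prop)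

/-- The chord of `K` on the line `a + ℝu` is attained: it has end points at parameters `α` and
`α - diam`. -/
lemma exists_chord_ends (hK : IsCompact K) (hu : ‖u‖ = 1)
    (hne : (K ∩ lineThrough a u).Nonempty) :
    ∃ α : ℝ, a + α • u ∈ K ∧ a + (α - diam (K ∩ lineThrough a u)) • u ∈ K := by
  have hc : IsCompact (K ∩ lineThrough a u) := hK.inter_right (isClosed_lineThrough a u)
  obtain ⟨⟨p, q⟩, ⟨hp, hq⟩, hmax⟩ := (hc.prod hc).exists_isMaxOn (hne.prod hne)
    (continuous_dist (α := EuclideanSpace ℝ (Fin n))).continuousOn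
  have hd : diam (K ∩ lineThrough a u) = dist p q :=
    le_antisymm (diam_le_of_forall_dist_le dist_nonneg
      fun y hy z hz => hmax (a := (y, z)) ⟨hy, hz⟩) (dist_le_diam_of_mem hc.isBounded hp hq)
  obtain ⟨hpK, s, rfl⟩ := hp
  obtain ⟨hqK, t, rfl⟩ := hq
  rw [hd, dist_add_left, dist_eq_norm, ← sub_smul, norm_smul, hu, mul_one, Real.norm_eq_abs]
  rcases le_total t s with h | h
  · refine ⟨s, hpK, ?_⟩
    rwa [abs_of_nonneg (by linarith), sub_sub_cancel]
  · refine ⟨t, hqK, ?_⟩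
    rwa [abs_of_nonpos (by linarith), neg_sub, sub_sub_cancel]

lemma inner_lt_of_mem_interior (hw : w ≠ 0) (hsup : ∀ y ∈ L, ⟪w, y⟫ ≤ ⟪w, x⟫)
    {z : EuclideanSpace ℝ (Fin n)} (hz : z ∈ interior L) : ⟪w, z⟫ < ⟪w, x⟫ := by
  have hc : Continuous fun s : ℝ => z + s • w := by fun_prop
  have hnhds : (fun s : ℝ => z + s • w) ⁻¹' interior L ∈ nhds (0 : ℝ) :=
    (isOpen_interior.preimage hc).mem_nhds (by simpa using hz)
  obtain ⟨ε, hε, hball⟩ := Metric.mem_nhds_iff.1 hnhds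
  have hmem : z + (ε / 2) • w ∈ L := interior_subset (hball (a := ε / 2) (by
    rw [mem_ball, Real.dist_eq, sub_zero, abs_of_pos (by positivity)]; linarith))
  have := hsup _ hmem
  rw [inner_add_right, inner_smul_right, real_inner_self_eq_norm_sq] at this
  have : 0 < ε / 2 * ‖w‖ ^ 2 := by positivity
  linarith

lemma lineSupports_of_inner_eq (hw : w ≠ 0) (hsup : ∀ y ∈ L, ⟪w, y⟫ ≤ ⟪w, x⟫) (hx : x ∈ L)
    (huw : ⟪w, u⟫ = 0) : LineSupports L x u := by
  refine ⟨⟨x, ⟨0, by simp⟩, hx⟩, eq_empty_iff_forall_notMem.2 ?_⟩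
  rintro _ ⟨⟨t, rfl⟩, hi⟩
  have := inner_lt_of_mem_interior hw hsup hi
  rw [inner_add_right, inner_smul_right, huw] at this
  linarith

/-- In a supporting hyperplane `H = {⟪w, ·⟫ = ⟪w, x⟫}` of `L`, no chord of `K` parallel to `u` is
longer than the common length `l` of the chords parallel to `u` that support `L`.

The chord `[y - c u, y] ⊆ H` is moved, parallel to itself, along the ray from `y` through an interior
point `z₀ = y + d` of `L`. The first and the last line of the family `y + s d + ℝu` that meet `L`, at
parameters `s₀ < s₁`, support `L`, so both carry chords of length `l`. As `0 ≤ s₀ < s₁`, concavity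
of the chord length in `s` gives `l ≥ (1 - s₀/s₁) c + (s₀/s₁) l`, that is `c ≤ l`. -/
lemma chord_le (hKcpt : IsCompact K) (hKconv : Convex ℝ K)
    (hLcpt : IsCompact L) (hLint : (interior L).Nonempty) (hLK : L ⊆ K) {l : ℝ} (hu : ‖u‖ = 1)
    (hchord : ∀ a, LineSupports L a u → diam (K ∩ lineThrough a u) = l)
    (hw : w ≠ 0) (hsup : ∀ y ∈ L, ⟪w, y⟫ ≤ ⟪w, x⟫) (huw : ⟪w, u⟫ = 0)
    {y : EuclideanSpace ℝ (Fin n)} {c : ℝ} (hy : y ∈ K) (hz : y - c • u ∈ K)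
    (hyx : ⟪w, y⟫ = ⟪w, x⟫) : c ≤ l := by
  obtain ⟨z₀, hz₀⟩ := hLint
  set d := z₀ - y with hd
  have hwd : ⟪w, d⟫ < 0 := by
    rw [hd, inner_sub_right, hyx]
    linarith [inner_lt_of_mem_interior hw hsup hz₀]
  -- `P` is the plane `y + span {d, u}` and `σ` its coordinate `s` along `d`.
  let P : Set (EuclideanSpace ℝ (Fin n)) :=
    (fun v => v - y) ⁻¹' (Submodule.span ℝ {d, u} : Set _)
  have hP : IsClosed P := (Submodule.closed_of_finiteDimensional _).preimage (by fun_prop)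
  have hPmem : ∀ s t : ℝ, y + s • d + t • u ∈ P := fun s t =>
    Submodule.mem_span_pair.2 ⟨s, t, by module⟩
  let σ : EuclideanSpace ℝ (Fin n) → ℝ := fun v => ⟪w, v - y⟫ / ⟪w, d⟫
  have hσc : Continuous σ := by fun_prop
  have hσ : ∀ s t : ℝ, σ (y + s • d + t • u) = s := fun s t => by
    have : y + s • d + t • u - y = s • d + t • u := by module
    simp only [σ]
    rw [this, inner_add_right, inner_smul_right, inner_smul_right, huw, mul_zero, add_zero,
      mul_div_cancel_right₀ _ hwd.ne]
  have hS : IsCompact (L ∩ P) := hLcpt.inter_right hP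
  have hz₀' : z₀ = y + (1 : ℝ) • d + (0 : ℝ) • u := by rw [hd]; module
  have hz₀P : z₀ ∈ L ∩ P := ⟨interior_subset hz₀, hz₀' ▸ hPmem 1 0⟩
  have hσz₀ : σ z₀ = 1 := by rw [hz₀']; exact hσ 1 0
  have hmove : ∀ s t : ℝ, y + s • d + t • u ∈ interior L →
      ∃ ε > 0, y + (s + ε) • d + t • u ∈ L ∧ y + (s - ε) • d + t • u ∈ L := by
    intro s t hi
    have hc : Continuous fun r : ℝ => y + (s + r) • d + t • u := by fun_prop
    have hnhds : (fun r : ℝ => y + (s + r) • d + t • u) ⁻¹' interior L ∈ nhds (0 : ℝ) :=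
      (isOpen_interior.preimage hc).mem_nhds (by simpa using hi)
    obtain ⟨ε, hε, hball⟩ := Metric.mem_nhds_iff.1 hnhds
    refine ⟨ε / 2, by positivity, interior_subset (hball (a := ε / 2) ?_), ?_⟩
    · rw [mem_ball, Real.dist_eq, sub_zero, abs_of_pos (by positivity)]; linarith
    · rw [sub_eq_add_neg s]
      refine interior_subset (hball (a := -(ε / 2)) ?_)
      rw [mem_ball, Real.dist_eq, sub_zero, abs_neg, abs_of_pos (by positivity)]; linarith
  have hsupp : ∀ s : ℝ, (∃ t : ℝ, y + s • d + t • u ∈ L) →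
      ((∀ v ∈ L ∩ P, s ≤ σ v) ∨ (∀ v ∈ L ∩ P, σ v ≤ s)) → LineSupports L (y + s • d) u := by
    rintro s ⟨t, ht⟩ hext
    refine ⟨⟨_, ⟨t, rfl⟩, ht⟩, eq_empty_iff_forall_notMem.2 ?_⟩
    rintro _ ⟨⟨t', rfl⟩, hi⟩
    obtain ⟨ε, hε, h1, h2⟩ := hmove s t' hi
    rcases hext with h | h
    · have := h _ ⟨h2, hPmem _ _⟩
      rw [hσ] at this
      linarith
    · have := h _ ⟨h1, hPmem _ _⟩
      rw [hσ] at this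
      linarith
  have hform : ∀ v ∈ L ∩ P, ∃ t : ℝ, y + σ v • d + t • u ∈ L := by
    rintro v ⟨hvL, hvP⟩
    obtain ⟨s, t, hst⟩ := Submodule.mem_span_pair.1 hvP
    have hv : v = y + s • d + t • u := by
      rw [add_assoc, hst]; simp
    refine ⟨t, ?_⟩
    have : σ v = s := by rw [hv, hσ]
    rw [this, ← hv]
    exact hvL
  obtain ⟨v₀, hv₀, hmin⟩ := hS.exists_isMinOn ⟨z₀, hz₀P⟩ hσc.continuousOn
  obtain ⟨v₁, hv₁, hmax⟩ := hS.exists_isMaxOn ⟨z₀, hz₀P⟩ hσc.continuousOn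
  have hsup₀ := hsupp _ (hform v₀ hv₀) (.inl fun v hv => hmin hv)
  have hsup₁ := hsupp _ (hform v₁ hv₁) (.inr fun v hv => hmax hv)
  set s₀ := σ v₀
  set s₁ := σ v₁
  have hs₀ : 0 ≤ s₀ := by
    refine div_nonneg_of_nonpos ?_ hwd.le
    rw [inner_sub_right, hyx]
    linarith [hsup _ hv₀.1]
  have hs₀1 : s₀ < 1 := by
    refine lt_of_le_of_ne (hσz₀ ▸ hmin hz₀P) fun h => ?_
    have : z₀ ∈ lineThrough (y + s₀ • d) u ∩ interior L := ⟨⟨0, by rw [h]; exact hz₀'⟩, hz₀⟩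
    rw [hsup₀.2] at this
    exact this
  have hs₁1 : 1 ≤ s₁ := hσz₀ ▸ hmax hz₀P
  have hne₁ : (K ∩ lineThrough (y + s₁ • d) u).Nonempty := by
    obtain ⟨v, hv, hvL⟩ := hsup₁.1
    exact ⟨v, hLK hvL, hv⟩
  -- The point of `[y, end of the last chord]` on the first line divides in the ratio `θ = s₀ / s₁`.
  obtain ⟨α, hα, hβ⟩ := exists_chord_ends hKcpt hu hne₁
  rw [hchord _ hsup₁] at hβ
  set θ := s₀ / s₁ with hθ
  have hs₁0 : 0 < s₁ := by linarith
  have hθ0 : 0 ≤ θ := by positivity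
  have hθ1 : θ < 1 := (div_lt_one hs₁0).2 (by linarith)
  have hθs : θ * s₁ = s₀ := div_mul_cancel₀ _ hs₁0.ne'
  have k1 := hKconv hy hα (by linarith : 0 ≤ 1 - θ) hθ0 (by ring)
  have k2 := hKconv hz hβ (by linarith : 0 ≤ 1 - θ) hθ0 (by ring)
  have e1 : (1 - θ) • y + θ • (y + s₁ • d + α • u) = y + s₀ • d + (θ * α) • u := by
    rw [← hθs]; module
  have e2 : (1 - θ) • (y - c • u) + θ • (y + s₁ • d + (α - l) • u) =
      y + s₀ • d + (θ * α - ((1 - θ) * c + θ * l)) • u := by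
    rw [← hθs]; module
  rw [e1] at k1
  rw [e2] at k2
  have := sub_le_diam_chord hKcpt hu k1 k2
  rw [hchord _ hsup₀] at this
  nlinarith

end

/-- If every chord of `K` parallel to a given direction `u` whose line supports `L`
has the same length `lam u`, then for every boundary point `x` of `L` and every
supporting hyperplane `H` of `L` at `x`, the section `H ∩ K` is centrally symmetric
with center `x`. -/
theorem stmt_1 {n : ℕ} (hn : 3 ≤ n) (K L : Set (EuclideanSpace ℝ (Fin n)))
    (hKcpt : IsCompact K) (hKconv : Convex ℝ K) (hKint : (interior K).Nonempty)
    (hLcpt : IsCompact L) (hLconv : Convex ℝ L) (hLint : (interior L).Nonempty)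
    (hLK : L ⊆ interior K)
    (lam : EuclideanSpace ℝ (Fin n) → ℝ)
    (hchord : ∀ u : EuclideanSpace ℝ (Fin n), ‖u‖ = 1 →
      ∀ a : EuclideanSpace ℝ (Fin n), LineSupports L a u →
        Metric.diam (K ∩ lineThrough a u) = lam u) :
    ∀ x ∈ frontier L, ∀ w : EuclideanSpace ℝ (Fin n), w ≠ 0 →
      (∀ y ∈ L, ⟪w, y⟫ ≤ ⟪w, x⟫) →
      {y | ⟪w, y⟫ = ⟪w, x⟫} ∩ K =
        (fun y => (2 : ℝ) • x - y) '' ({y | ⟪w, y⟫ = ⟪w, x⟫} ∩ K) := by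
  intro x hx w hw hsup
  have hxL : x ∈ L := hLcpt.isClosed.frontier_subset hx
  have hLK' : L ⊆ K := hLK.trans interior_subset
  -- The section `H ∩ K`, translated by `-x`, is a convex body `M` in `V = wᗮ` around `0`.
  let V : Submodule ℝ (EuclideanSpace ℝ (Fin n)) := (Submodule.span ℝ {w})ᗮ
  have hV : ∀ v, v ∈ V ↔ ⟪w, v⟫ = 0 := fun v => Submodule.mem_orthogonal_singleton_iff_inner_right
  have hdim : 1 < Module.finrank ℝ V := by
    have h := Submodule.finrank_add_finrank_orthogonal (Submodule.span ℝ {w})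
    rw [finrank_span_singleton hw, finrank_euclideanSpace_fin] at h
    change 1 + Module.finrank ℝ V = n at h
    omega
  let ι : V → EuclideanSpace ℝ (Fin n) := fun v => x + v
  have hι : Continuous ι := by fun_prop
  let M : Set V := ι ⁻¹' K
  have hMconv : Convex ℝ M := by
    intro p hp q hq a b ha hb hab
    have := hKconv hp hq ha hb hab
    have e : a • ι p + b • ι q = ι (a • p + b • q) := by
      obtain rfl : b = 1 - a := by linarith
      simp only [ι, Submodule.coe_add, Submodule.coe_smul]
      module
    rwa [e] at this
  have hMcl : IsClosed M := hKcpt.isClosed.preimage hι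
  have hMbd : Bornology.IsBounded M := by
    obtain ⟨R, hR⟩ := hKcpt.isBounded.subset_closedBall x
    refine isBounded_closedBall (x := (0 : V)) (r := R) |>.subset fun v hv => ?_
    have := hR hv
    simpa [ι, dist_eq_norm] using this
  have hM0 : M ∈ nhds (0 : V) := by
    refine Filter.mem_of_superset ((isOpen_interior.preimage hι).mem_nhds ?_)
      (preimage_mono interior_subset)
    simpa [ι] using hLK hxL
  have hfit : ∀ y ∈ M, ∀ z ∈ M, ∃ α : ℝ, α • (y - z) ∈ M ∧ (α - 1) • (y - z) ∈ M := by
    intro y hy z hz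
    rcases eq_or_ne y z with rfl | hyz
    · exact ⟨0, by simpa using mem_of_mem_nhds hM0⟩
    set c : ℝ := ‖y - z‖ with hc
    have hc0 : 0 < c := norm_pos_iff.2 (sub_ne_zero.2 hyz)
    obtain ⟨u, hyzu⟩ : ∃ u : V, y - z = c • u :=
      ⟨c⁻¹ • (y - z), (smul_inv_smul₀ hc0.ne' _).symm⟩
    have hu : ‖(u : EuclideanSpace ℝ (Fin n))‖ = 1 := by
      have h : c = c * ‖u‖ := by
        rw [← abs_of_pos hc0, ← Real.norm_eq_abs, ← norm_smul, ← hyzu, hc, norm_norm]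
      exact mul_left_cancel₀ hc0.ne' (by rw [mul_one]; exact h.symm)
    have huw : ⟪w, (u : EuclideanSpace ℝ (Fin n))⟫ = 0 := (hV _).1 u.2
    have hcl : c ≤ lam u := by
      refine chord_le hKcpt hKconv hLcpt hLint hLK' hu (hchord u hu) hw hsup huw hy ?_ ?_
      · have : ι y - c • (u : EuclideanSpace ℝ (Fin n)) = ι z := by
          have h := congrArg (Subtype.val) hyzu
          simp only [Submodule.coe_sub, Submodule.coe_smul] at h
          simp only [ι]
          rw [← h]; module
        rw [this]; exact hz
      · simp only [ι]
        rw [inner_add_right, (hV _).1 y.2, add_zero]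
    have hsx := lineSupports_of_inner_eq hw hsup hxL huw
    obtain ⟨α, h1, h2⟩ := exists_chord_ends hKcpt hu
      ⟨x, hLK' hxL, (⟨0, by simp⟩ : x ∈ lineThrough x (u : EuclideanSpace ℝ (Fin n)))⟩
    rw [hchord _ hu _ hsx] at h2
    have h1' : α • u ∈ M := h1
    have h2' : (α - lam u) • u ∈ M := h2
    have hl : 0 < lam u := hc0.trans_le hcl
    -- `(α - c) u` lies between `α u` and `(α - lam u) u`, because `c ≤ lam u`.
    refine ⟨α / c, ?_, ?_⟩
    · rwa [hyzu, smul_smul, div_mul_cancel₀ _ hc0.ne']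
    · have := hMconv h1' h2' (a := 1 - c / lam u) (b := c / lam u)
        (sub_nonneg.2 ((div_le_one hl).2 hcl)) (by positivity) (by ring)
      convert this using 1
      rw [hyzu, smul_smul, smul_smul, smul_smul, ← add_smul]
      congr 1
      field_simp
      ring
  have hrefl : ∀ y, ⟪w, y⟫ = ⟪w, x⟫ → y ∈ K →
      ⟪w, (2 : ℝ) • x - y⟫ = ⟪w, x⟫ ∧ (2 : ℝ) • x - y ∈ K := by
    intro y hyw hyK
    refine ⟨by rw [inner_sub_right, inner_smul_right, hyw]; ring, ?_⟩
    have hyV : y - x ∈ V := (hV _).2 (by rw [inner_sub_right, hyw, sub_self])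
    have hyM : (⟨y - x, hyV⟩ : V) ∈ M := by simpa [M, ι] using hyK
    have := neg_mem_of_fit hdim hMconv hMcl hMbd hM0 hfit hyM
    have h2 : x + -(y - x) ∈ K := this
    convert h2 using 1
    module
  ext y
  constructor
  · rintro ⟨h1, h2⟩
    exact ⟨_, hrefl y h1 h2, by simp⟩
  · rintro ⟨y', ⟨h1, h2⟩, rfl⟩
    exact hrefl y' h1 h2
end
end

section
/- Let K, L, M be convex bodies in ℝⁿ with n ≥ 3, L ⊂ int K and K ⊂ int M. Suppose that for every point x ∈ ∂M there is a number λ(x) such that every line through x supporting L intersects K in a chord of length λ(x). Then K and L are concentric Euclidean balls. -/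
/-!
Call `p ∈ ∂L` touched, with normal `ν`, if a ball contained in `L` touches `∂L` at `p` with outer
unit normal `ν`. Touched points are dense in `∂L`, and no smoothness of the bodies is needed
beyond this.

*Tangent sections are balls.* Let `ℓ` be a line through a touched point `p` orthogonal to `ν`.
Rotating `ℓ` inside the tangent hyperplane about a point `x ∈ ℓ ∩ ∂M` by a slope `ε` gives, after a
correction of size `O(ε²)` in the direction `ν`, another line supporting `L` (`exists_tilt`). The
chord length is constant along this family, so its upper bound coming from support hyperplanes
of `K` at the ends of the chord is minimal at `ε = 0`, which gives a linear relation between the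
two support normals (`chord_first_order`). The relations for the two points of `ℓ ∩ ∂M` together
show that these normals are orthogonal to the directions of the tangent hyperplane orthogonal to
`ℓ`. Hence the radial function of the section of `K` around `p` is constant: the section is a ball
centred at `p` (`Config.exists_disc`).

*Comparison.* The sections at two touched points `p`, `q` close to each other meet. As `n ≥ 3`,
their hyperplanes share a line; it leaves `M` at a point seeing both sections, so the radii agree,
and both balls cut the same set on the common flat, which forces `p - q = t (ν - μ)`
(`Config.pair_of_common`). The normals near a boundary point are not contained in a proper subspace
(`Config.exists_normal_notMem`), so `t` does not depend on the pair: locally `p - t ν` is a constant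
`c` (`Config.exists_loc`). As `∂L` is connected, `c`, `t` and the radius `R` of the sections are
global (`Config.exists_global`).

*Conclusion.* By density `∂L` lies on the sphere of radius `|t|` about `c`, so `L` is a ball. Every
`x ∈ ∂K` lies in a hyperplane tangent to `L`, at distance `R` from the point of contact, so
`dist x c ^ 2 = R ^ 2 + t ^ 2`, and `K` is a ball about `c` as well.
-/

open Metric Set
open scoped RealInnerProductSpace

noncomputable section

/-! ### Convex bodies: exits, supports and touching balls -/

lemma subset_interior_of_disjoint_frontier {X : Type*} [TopologicalSpace X] {s A : Set X}
    (hs : IsPreconnected s) (hne : (s ∩ interior A).Nonempty) (hd : ∀ x ∈ s, x ∉ frontier A) :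
    s ⊆ interior A := by
  refine hs.subset_left_of_subset_union (v := (closure A)ᶜ) isOpen_interior
    isClosed_closure.isOpen_compl ?_ ?_ hne
  · exact disjoint_compl_right.mono_left (interior_subset.trans subset_closure)
  · intro x hx
    by_cases h : x ∈ closure A
    · exact Or.inl (by_contra fun h' => hd x hx ⟨h, h'⟩)
    · exact Or.inr h

section General

variable {E : Type*} [NormedAddCommGroup E] [InnerProductSpace ℝ E]

/-- A ray starting in the interior of a compact set leaves it through the frontier. -/
lemma exists_exit {A : Set E} (hA : IsCompact A) {y v : E} (hy : y ∈ interior A) (hv : v ≠ 0) :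
    ∃ s : ℝ, 0 < s ∧ y + s • v ∈ frontier A := by
  by_contra! hcon
  have hsub : (fun s : ℝ => y + s • v) '' Ici 0 ⊆ interior A := by
    refine subset_interior_of_disjoint_frontier
      ((isPreconnected_Ici).image _ (by fun_prop)) ⟨y, ⟨0, by simp, by simp⟩, hy⟩ ?_
    rintro _ ⟨s, hs, rfl⟩ hmem
    rcases (mem_Ici.mp hs).eq_or_lt with h | h
    · subst h
      simp only [zero_smul, add_zero] at hmem
      exact hmem.2 hy
    · exact hcon s h hmem
  obtain ⟨C, hC⟩ := hA.isBounded.exists_norm_le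
  have hv' : 0 < ‖v‖ := norm_pos_iff.mpr hv
  have hCn : 0 ≤ C := (norm_nonneg y).trans (hC y (interior_subset hy))
  have h1 := hC _ (interior_subset (hsub ⟨(C + ‖y‖ + 1) / ‖v‖, mem_Ici.mpr (by positivity), rfl⟩))
  simp only at h1
  have h2 : ‖((C + ‖y‖ + 1) / ‖v‖) • v‖ = C + ‖y‖ + 1 := by
    rw [norm_smul, Real.norm_of_nonneg (by positivity), div_mul_cancel₀ _ hv'.ne']
  have h3 := norm_sub_norm_le (((C + ‖y‖ + 1) / ‖v‖) • v) (-y)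
  rw [sub_neg_eq_add, norm_neg, h2, add_comm _ y] at h3
  linarith

/-- If the frontier of a compact set lies on a sphere, the set is the corresponding ball. -/
lemma eq_closedBall_of_frontier_subset {A : Set E} (hA : IsCompact A)
    (hAi : (interior A).Nonempty) [Nontrivial E] {c : E} {r : ℝ}
    (hfr : ∀ x ∈ frontier A, dist x c = r) : A = closedBall c r := by
  have hsubI : ∀ x ∈ interior A, dist x c < r := by
    intro x hx
    -- leave `A` from `x` in the direction pointing away from `c`
    by_cases hxc : x = c
    · obtain ⟨v, hv⟩ := exists_ne (0 : E)
      obtain ⟨s, hs, hm⟩ := exists_exit hA hx hv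
      have := hfr _ hm
      rw [← this, hxc, dist_self, dist_eq_norm]
      rw [add_sub_cancel_left, norm_smul, Real.norm_of_nonneg hs.le]
      have := norm_pos_iff.mpr hv
      positivity
    · obtain ⟨s, hs, hm⟩ := exists_exit hA hx (sub_ne_zero.mpr hxc)
      have h1 := hfr _ hm
      have h2 : x + s • (x - c) - c = (1 + s) • (x - c) := by module
      have h3 : 0 < ‖x - c‖ := norm_pos_iff.mpr (sub_ne_zero.mpr hxc)
      rw [dist_eq_norm, h2, norm_smul, Real.norm_of_nonneg (by linarith)] at h1
      rw [dist_eq_norm]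
      nlinarith
  obtain ⟨x0, hx0⟩ := hAi
  have hr : 0 < r := dist_nonneg.trans_lt (hsubI x0 hx0)
  have hball : ball c r ⊆ interior A := by
    refine subset_interior_of_disjoint_frontier (convex_ball c r).isPreconnected
      ⟨x0, hsubI x0 hx0, hx0⟩ ?_
    intro x hx hxf
    exact (mem_ball.mp hx).ne (hfr x hxf)
  refine Subset.antisymm (fun x hx => ?_) ?_
  · by_cases hxi : x ∈ interior A
    · exact (hsubI x hxi).le
    · exact (hfr x ⟨subset_closure hx, hxi⟩).le
  · rw [← closure_ball c hr.ne']
    exact hA.isClosed.closure_subset_iff.mpr (hball.trans interior_subset)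

/-- `p` is a boundary point of `L` at which a ball contained in `L` touches the boundary, and
`ν` is the outer unit normal of that ball at `p`. -/
def Touch (L : Set E) (p ν : E) : Prop :=
  ‖ν‖ = 1 ∧ p ∈ frontier L ∧ ∃ r : ℝ, 0 < r ∧ closedBall (p - r • ν) r ⊆ L

/-- Points touched by inner balls are dense in the boundary: take an interior point near the
given one and a boundary point nearest to it. -/
lemma exists_touch_near {L : Set E} (hL : IsCompact L) (hLc : Convex ℝ L)
    (hLi : (interior L).Nonempty) {p0 : E} (hp0 : p0 ∈ frontier L) {ε : ℝ} (hε : 0 < ε) :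
    ∃ p ν, Touch L p ν ∧ dist p p0 < ε := by
  have h1 : p0 ∈ closure (interior L) := by
    rw [hLc.closure_interior_eq_closure_of_nonempty_interior hLi]; exact hp0.1
  obtain ⟨q, hq, hqd⟩ := Metric.mem_closure_iff.mp h1 (ε / 2) (by linarith)
  have hfc : IsCompact (frontier L) :=
    hL.of_isClosed_subset isClosed_frontier hL.isClosed.frontier_subset
  obtain ⟨p, hp, hpm⟩ := hfc.exists_isMinOn ⟨p0, hp0⟩
    (f := fun z => dist q z) (by fun_prop)
  have hmin : ∀ z ∈ frontier L, dist q p ≤ dist q z := fun z hz => hpm hz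
  have hr : 0 < dist q p := dist_pos.mpr (by rintro rfl; exact hp.2 hq)
  refine ⟨p, (dist q p)⁻¹ • (p - q), ⟨?_, hp, dist q p, hr, ?_⟩, ?_⟩
  · rw [norm_smul, norm_inv, Real.norm_of_nonneg hr.le, dist_comm, dist_eq_norm]
    rw [dist_comm, dist_eq_norm] at hr
    exact inv_mul_cancel₀ hr.ne'
  · rw [smul_smul, mul_inv_cancel₀ hr.ne', one_smul, sub_sub_cancel, ← closure_ball q hr.ne']
    refine hL.isClosed.closure_subset_iff.mpr (Subset.trans ?_ interior_subset)
    refine subset_interior_of_disjoint_frontier (convex_ball q _).isPreconnected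
      ⟨q, mem_ball_self hr, hq⟩ ?_
    intro z hz hzf
    have := hmin z hzf
    rw [mem_ball, dist_comm] at hz
    linarith
  · have h2 := hmin p0 hp0
    have h3 := dist_triangle p q p0
    rw [dist_comm p q, dist_comm q p0] at h3
    rw [dist_comm q p0] at h2
    linarith

/-- A support normal at a point outside the interior, strict on the interior. -/
lemma exists_support [CompleteSpace E] {A : Set E} (hA : Convex ℝ A)
    (hAi : (interior A).Nonempty) {z : E} (hz : z ∉ interior A) :
    ∃ w : E, (∀ k ∈ A, inner ℝ w (k - z) ≤ 0) ∧ ∀ k ∈ interior A, inner ℝ w (k - z) < 0 := by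
  obtain ⟨f, hf⟩ := geometric_hahn_banach_open_point hA.interior isOpen_interior hz
  have hw : ∀ y, inner ℝ ((InnerProductSpace.toDual ℝ E).symm f) y = f y := fun y =>
    InnerProductSpace.toDual_symm_apply
  refine ⟨(InnerProductSpace.toDual ℝ E).symm f, fun k hk => ?_, fun k hk => ?_⟩
  · rw [hw, map_sub, sub_nonpos]
    have hk' : k ∈ closure (interior A) := by
      rw [hA.closure_interior_eq_closure_of_nonempty_interior hAi]; exact subset_closure hk
    exact closure_minimal (fun a ha => (hf a ha).le)
      (isClosed_le f.continuous continuous_const) hk'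
  · rw [hw, map_sub, sub_neg]
    exact hf k hk

/-- The touching ball forces its normal to be a support normal of `L`. -/
lemma Touch.support [CompleteSpace E] {L : Set E} (hLc : Convex ℝ L)
    (hLi : (interior L).Nonempty) {p ν : E} (h : Touch L p ν) :
    (∀ y ∈ L, inner ℝ ν (y - p) ≤ 0) ∧ ∀ y ∈ interior L, inner ℝ ν (y - p) < 0 := by
  obtain ⟨hν, hp, r, hr, hball⟩ := h
  obtain ⟨w, hw1, hw2⟩ := exists_support hLc hLi hp.2
  have hw0 : 0 < ‖w‖ := by
    rw [norm_pos_iff]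
    rintro rfl
    obtain ⟨y, hy⟩ := hLi
    simpa using hw2 y hy
  have h1 : p - r • ν + (r / ‖w‖) • w ∈ L := by
    apply hball
    rw [mem_closedBall, dist_eq_norm, add_sub_cancel_left, norm_smul,
      Real.norm_of_nonneg (by positivity), div_mul_cancel₀ _ hw0.ne']
  have h2 := hw1 _ h1
  have h3 : p - r • ν + (r / ‖w‖) • w - p = (r / ‖w‖) • w - r • ν := by abel
  rw [h3, inner_sub_right, inner_smul_right, inner_smul_right, real_inner_self_eq_norm_sq] at h2
  have h4 : r / ‖w‖ * ‖w‖ ^ 2 = r * ‖w‖ := by field_simp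
  rw [h4] at h2
  have h5 : ‖w‖ ≤ inner ℝ w ν := by nlinarith
  have h6 : inner ℝ w ν = ‖w‖ * ‖ν‖ :=
    le_antisymm (real_inner_le_norm w ν) (by rw [hν, mul_one]; exact h5)
  have h7 : w = ‖w‖ • ν := by
    have := inner_eq_norm_mul_iff_real.mp h6
    rw [hν, one_smul] at this
    exact this
  have h8 : ∀ y, inner ℝ w y = ‖w‖ * inner ℝ ν y := by
    intro y
    conv_lhs => rw [h7]
    rw [real_inner_smul_left]
  refine ⟨fun y hy => ?_, fun y hy => ?_⟩
  · have := hw1 y hy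
    rw [h8] at this
    by_contra hc
    push Not at hc
    nlinarith
  · have := hw2 y hy
    rw [h8] at this
    by_contra hc
    push Not at hc
    nlinarith

lemma exists_unit_orthogonal [FiniteDimensional ℝ E] {V : Submodule ℝ E} (hV : V ≠ ⊤) :
    ∃ f : E, ‖f‖ = 1 ∧ ∀ v ∈ V, inner ℝ v f = 0 := by
  have h1 : Vᗮ ≠ ⊥ := fun h => hV (Submodule.orthogonal_eq_bot_iff.mp h)
  obtain ⟨f, hf, hf0⟩ := (Submodule.ne_bot_iff _).mp h1
  have hf1 := norm_pos_iff.mpr hf0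
  refine ⟨‖f‖⁻¹ • f, ?_, fun v hv => ?_⟩
  · rw [norm_smul, norm_inv, norm_norm, inv_mul_cancel₀ hf1.ne']
  · rw [inner_smul_right, (Submodule.mem_orthogonal V f).mp hf v hv, mul_zero]

lemma span_pair_ne_top [FiniteDimensional ℝ E] (hd : 3 ≤ Module.finrank ℝ E) (a b : E) :
    Submodule.span ℝ {a, b} ≠ ⊤ := by
  classical
  intro h
  have h1 := finrank_span_finset_le_card (R := ℝ) ({a, b} : Finset E)
  have h2 : ({a, b} : Finset E).card ≤ 2 := Finset.card_le_two
  rw [Set.finrank, Finset.coe_pair, h, finrank_top] at h1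
  omega

lemma exists_unit_orthogonal_pair [FiniteDimensional ℝ E] (hd : 3 ≤ Module.finrank ℝ E)
    (a b : E) : ∃ f : E, ‖f‖ = 1 ∧ inner ℝ a f = 0 ∧ inner ℝ b f = 0 := by
  obtain ⟨f, hf, hf'⟩ := exists_unit_orthogonal (span_pair_ne_top hd a b)
  exact ⟨f, hf, hf' a (Submodule.subset_span (by simp)), hf' b (Submodule.subset_span (by simp))⟩

/-- Comparison constants around a triangle with independent third normal agree. -/
lemma triangle_eq {a b u : E} {t₁ t₂ t₃ : ℝ} (hab : a ≠ b) (hu : u ∉ Submodule.span ℝ {a, b})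
    (hsum : t₁ • (a - b) + t₂ • (b - u) + t₃ • (u - a) = 0) : t₁ = t₃ := by
  have h23 : t₃ = t₂ := by
    by_contra hne
    refine hu (Submodule.mem_span_pair.mpr
      ⟨(t₃ - t₂)⁻¹ * (t₃ - t₁), (t₃ - t₂)⁻¹ * (t₁ - t₂), ?_⟩)
    have h1 : (t₃ - t₁) • a + (t₁ - t₂) • b = (t₃ - t₂) • u := by
      rw [← sub_eq_zero, ← neg_eq_zero, ← hsum]; module
    rw [mul_smul, mul_smul, ← smul_add, h1, smul_smul, inv_mul_cancel₀ (sub_ne_zero.mpr hne),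
      one_smul]
  have h1 : (t₁ - t₃) • (a - b) = 0 := by
    rw [← hsum, h23]; module
  exact sub_eq_zero.mp ((smul_eq_zero.mp h1).resolve_right (sub_ne_zero.mpr hab))

/-! ### Sections of `K` by tangent hyperplanes at touched points -/

/-- Rotating a tangent line at a touched point `p` about one of its points `x`: for each small
slope `ε` in a direction `f` of the tangent hyperplane, a correction of size `O(ε²)` along the
normal makes the rotated line support `L` again. The correction is squeezed between the tangent
hyperplane and the touching ball. -/
lemma exists_tilt {L : Set E} (hL : IsCompact L) (hLc : Convex ℝ L) {p ν e f x : E} {r X ε : ℝ}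
    (hsup : ∀ y ∈ L, inner ℝ ν (y - p) ≤ 0) (hr : 0 < r) (hball : closedBall (p - r • ν) r ⊆ L)
    (hν : ‖ν‖ = 1) (he : ‖e‖ = 1) (hf : ‖f‖ = 1) (hνe : inner ℝ ν e = 0)
    (hνf : inner ℝ ν f = 0) (hef : inner ℝ e f = 0) (hX : 0 < X) (hx : x = p - X • e)
    (hxL : x ∉ L) (hε : ε ^ 2 * X ^ 2 ≤ r ^ 2) :
    ∃ η : ℝ, |η| ≤ X / r * ε ^ 2 ∧ (∃ s : ℝ, x + s • (e + ε • f + η • ν) ∈ L) ∧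
      ∀ s : ℝ, x + s • (e + ε • f + η • ν) ∉ interior L := by
  set d : ℝ → E := fun η => e + ε • f + η • ν with hd
  have hνν : inner ℝ ν ν = 1 := by rw [real_inner_self_eq_norm_sq, hν]; norm_num
  have hee : inner ℝ e e = 1 := by rw [real_inner_self_eq_norm_sq, he]; norm_num
  have hff : inner ℝ f f = 1 := by rw [real_inner_self_eq_norm_sq, hf]; norm_num
  have heν : inner ℝ e ν = 0 := by rw [real_inner_comm]; exact hνe
  have hfν : inner ℝ f ν = 0 := by rw [real_inner_comm]; exact hνf
  have hsν : ∀ η s : ℝ, inner ℝ ν (x + s • d η - p) = s * η := by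
    intro η s
    have : x + s • d η - p = (s - X) • e + (s * ε) • f + (s * η) • ν := by
      rw [hx, hd]; module
    rw [this]
    simp only [inner_add_right, inner_smul_right, hνe, hνf, hνν]; ring
  have hse : ∀ η s : ℝ, inner ℝ e (x + s • d η - x) = s := by
    intro η s
    rw [add_sub_cancel_left, hd]
    simp only [inner_add_right, inner_smul_right, hee, hef, heν]; ring
  obtain ⟨C, hC⟩ := hL.isBounded.exists_norm_le
  have hB : ∀ η s : ℝ, x + s • d η ∈ L → s ≤ C + ‖x‖ := by
    intro η s h
    have h1 := hC _ h
    have h2 := real_inner_le_norm e (x + s • d η - x)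
    rw [hse, he, one_mul] at h2
    exact h2.trans ((norm_sub_le _ _).trans (by linarith))
  have hneg : ∀ η s : ℝ, 0 < s → x + s • d η ∈ L → η ≤ 0 := by
    intro η s hs h
    have := hsup _ h
    rw [hsν] at this
    by_contra hc
    push Not at hc
    nlinarith
  set η0 : ℝ := -(X / r * ε ^ 2) with hη0
  have hη0n : η0 ≤ 0 := by rw [hη0, neg_nonpos]; positivity
  have hstart : x + X • d η0 ∈ L := by
    apply hball
    have h1 : x + X • d η0 - (p - r • ν) = (X * ε) • f + (r + X * η0) • ν := by
      rw [hx, hd]; module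
    rw [mem_closedBall, dist_eq_norm, h1]
    apply abs_le_of_sq_le_sq' _ hr.le |>.2
    rw [← real_inner_self_eq_norm_sq]
    simp only [inner_add_right, inner_add_left, inner_smul_right, real_inner_smul_left,
      hff, hνν, hfν, hνf]
    have h2 : X * η0 = -(X ^ 2 * ε ^ 2 / r) := by rw [hη0]; field_simp
    rw [h2]
    have h3 : 0 ≤ X ^ 2 * ε ^ 2 / r := by positivity
    have h4 : X ^ 2 * ε ^ 2 / r * r = X ^ 2 * ε ^ 2 := by field_simp
    have h5 : X ^ 2 * ε ^ 2 / r ≤ r := by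
      rw [div_le_iff₀ hr]; nlinarith
    nlinarith
  -- the supporting line is the extreme one: the largest correction for which it still meets `L`
  have hcpt : IsCompact ((Icc η0 0 ×ˢ Icc (0 : ℝ) (C + ‖x‖)) ∩
      {q : ℝ × ℝ | x + q.2 • d q.1 ∈ L}) := by
    refine (isCompact_Icc.prod isCompact_Icc).inter_right ?_
    exact hL.isClosed.preimage (by rw [hd]; fun_prop)
  obtain ⟨⟨η, s⟩, ⟨⟨hηI, hsI⟩, hmem⟩, hmax⟩ := hcpt.exists_isMaxOn
    ⟨(η0, X), ⟨⟨⟨le_rfl, hη0n⟩, ⟨hX.le, hB _ _ hstart⟩⟩, hstart⟩⟩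
    (f := Prod.fst) continuous_fst.continuousOn
  change x + s • d η ∈ L at hmem
  simp only at hηI hsI
  refine ⟨η, ?_, ⟨s, hmem⟩, fun s' hs' => ?_⟩
  · rw [abs_le]
    exact ⟨hηI.1, hηI.2.trans (by positivity)⟩
  · -- the point `x` separates the two half lines of the line, and it is not in `L`
    change x + s' • d η ∈ interior L at hs'
    have hs'pos : 0 < s' := by
      by_contra hc
      push Not at hc
      apply hxL
      rcases eq_or_lt_of_le hsI.1 with h | h
      · simpa [← h] using hmem
      have hw : 0 < s - s' := by linarith
      have := hLc hmem (interior_subset hs') (a := -s' / (s - s')) (b := s / (s - s'))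
        (div_nonneg (by linarith) hw.le) (div_nonneg h.le hw.le) (by field_simp; ring)
      convert this using 1
      have h1 : (-s' / (s - s')) • (x + s • d η) + (s / (s - s')) • (x + s' • d η)
        = ((-s' + s) / (s - s')) • x + ((-s' * s + s * s') / (s - s')) • d η := by module
      rw [h1, show -s' + s = s - s' by ring, show -s' * s + s * s' = 0 by ring, div_self hw.ne']
      simp
    have hev : ∀ᶠ η' in nhds η, x + s' • d η' ∈ interior L := by
      have hc : Continuous fun η' => x + s' • d η' := by rw [hd]; fun_prop
      exact hc.continuousAt.eventually_mem (isOpen_interior.mem_nhds hs')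
    obtain ⟨η', hη'm, hη'⟩ := (hev.filter_mono nhdsWithin_le_nhds |>.and
      (self_mem_nhdsWithin : Ioi η ∈ nhdsWithin η (Ioi η))).exists
    have hη'L : x + s' • d η' ∈ L := interior_subset hη'm
    have hle : η' ≤ η := hmax (show (η', s') ∈ _ from
      ⟨⟨⟨hηI.1.trans (le_of_lt hη'), hneg η' s' hs'pos (interior_subset hη'm)⟩,
        ⟨hs'pos.le, hB _ _ (interior_subset hη'm)⟩⟩, hη'L⟩)
    exact absurd hη' (not_lt.mpr hle)

/-- The hypothesis of the theorem: from every boundary point of `M`, the lines supporting `L`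
cut chords of equal length on `K`. -/
def EqualChords (K L M : Set E) (lam : E → ℝ) : Prop :=
  ∀ x ∈ frontier M, ∀ u : E, ‖u‖ = 1 → (∃ s : ℝ, x + s • u ∈ L) →
    (∀ s : ℝ, x + s • u ∉ interior L) → diam (K ∩ {y | ∃ s : ℝ, y = x + s • u}) = lam x

lemma EqualChords.scaled {K L M : Set E} {lam : E → ℝ} (h : EqualChords K L M lam) {x d : E}
    (hx : x ∈ frontier M) (hd : d ≠ 0) (hm : ∃ s : ℝ, x + s • d ∈ L)
    (hn : ∀ s : ℝ, x + s • d ∉ interior L) :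
    diam (K ∩ {y | ∃ s : ℝ, y = x + s • d}) = lam x := by
  have hd' : 0 < ‖d‖ := norm_pos_iff.mpr hd
  have key : ∀ s : ℝ, x + s • d = x + (s * ‖d‖) • (‖d‖⁻¹ • d) := by
    intro s; rw [smul_smul, mul_assoc, mul_inv_cancel₀ hd'.ne', mul_one]
  have key2 : ∀ s : ℝ, x + s • (‖d‖⁻¹ • d) = x + (s * ‖d‖⁻¹) • d := by
    intro s; rw [smul_smul]
  rw [← h x hx (‖d‖⁻¹ • d) (by rw [norm_smul, norm_inv, norm_norm, inv_mul_cancel₀ hd'.ne'])]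
  · congr 2
    ext y
    constructor
    · rintro ⟨s, rfl⟩; exact ⟨_, key s⟩
    · rintro ⟨s, rfl⟩; exact ⟨_, key2 s⟩
  · obtain ⟨s, hs⟩ := hm
    exact ⟨_, by rw [← key]; exact hs⟩
  · intro s
    rw [key2]
    exact hn _

/-- First-order consequence of rotating a chord about `x`. The chord has endpoints `x + a e`,
`x + b e`, supported by hyperplanes with normals `w₁`, `w₂`. These hyperplanes bound the length
of the rotated chords from above, and the length is stationary. -/
lemma chord_first_order {K L M : Set E} {lam : E → ℝ} (hK : IsCompact K) (hLK : L ⊆ K)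
    (h : EqualChords K L M lam) {x e f ν w₁ w₂ : E} {a b C δ : ℝ} (hx : x ∈ frontier M)
    (hν : ‖ν‖ = 1) (he : ‖e‖ = 1) (hf : ‖f‖ = 1) (hνe : inner ℝ ν e = 0)
    (hνf : inner ℝ ν f = 0) (hef : inner ℝ e f = 0) (hδ : 0 < δ)
    (htilt : ∀ ε : ℝ, |ε| ≤ δ → ∃ η : ℝ, |η| ≤ C * ε ^ 2 ∧
      (∃ s : ℝ, x + s • (e + ε • f + η • ν) ∈ L) ∧
      ∀ s : ℝ, x + s • (e + ε • f + η • ν) ∉ interior L)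
    (ha : x + a • e ∈ K) (hb : x + b • e ∈ K)
    (hw₁ : ∀ k ∈ K, inner ℝ w₁ (k - (x + a • e)) ≤ 0) (hw₁e : inner ℝ w₁ e = -1)
    (hw₂ : ∀ k ∈ K, inner ℝ w₂ (k - (x + b • e)) ≤ 0) (hw₂e : inner ℝ w₂ e = 1) :
    a * inner ℝ w₁ f + b * inner ℝ w₂ f = 0 := by
  choose! η hη hηm hηn using htilt
  set α := inner ℝ w₁ f with hα
  set β := inner ℝ w₂ f with hβ
  set d : ℝ → E := fun ε => e + ε • f + η ε • ν with hd
  have hη00 : η 0 = 0 := by simpa using hη 0 (by simpa using hδ.le)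
  have hnear : ∀ᶠ ε in nhds (0 : ℝ), |ε| ≤ δ := by
    filter_upwards [Metric.closedBall_mem_nhds (0 : ℝ) hδ] with ε hε
    simpa using hε
  have hηd : HasDerivAt η 0 0 := by
    rw [hasDerivAt_iff_isLittleO]
    simp only [hη00, sub_zero, smul_zero]
    have h1 : η =O[nhds 0] fun ε : ℝ => ε ^ 2 := by
      refine Asymptotics.IsBigO.of_bound C ?_
      filter_upwards [hnear] with ε hε
      simpa using hη ε hε
    exact h1.trans_isLittleO (by
      simpa using Asymptotics.isLittleO_pow_id (𝕜 := ℝ) (n := 2) (by norm_num))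
  have hνν : inner ℝ ν ν = 1 := by rw [real_inner_self_eq_norm_sq, hν]; norm_num
  have hee : inner ℝ e e = 1 := by rw [real_inner_self_eq_norm_sq, he]; norm_num
  have hff : inner ℝ f f = 1 := by rw [real_inner_self_eq_norm_sq, hf]; norm_num
  have heν : inner ℝ e ν = 0 := by rw [real_inner_comm]; exact hνe
  have hfν : inner ℝ f ν = 0 := by rw [real_inner_comm]; exact hνf
  have hfe : inner ℝ f e = 0 := by rw [real_inner_comm]; exact hef
  have hnorm : ∀ ε, ‖d ε‖ = √(1 + ε ^ 2 + η ε ^ 2) := by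
    intro ε
    rw [@norm_eq_sqrt_real_inner]
    congr 1
    simp only [hd, inner_add_right, inner_add_left, inner_smul_right, real_inner_smul_left,
      hff, hνν, hfν, hνf, hee, hef, hfe, heν, hνe]
    ring
  have hd0 : ∀ ε, d ε ≠ 0 := by
    intro ε h0
    have := hnorm ε
    rw [h0, norm_zero, eq_comm, Real.sqrt_eq_zero (by positivity)] at this
    nlinarith [sq_nonneg ε, sq_nonneg (η ε)]
  set D₁ : ℝ → ℝ := fun ε => 1 - ε * α - η ε * inner ℝ w₁ ν with hD₁
  set D₂ : ℝ → ℝ := fun ε => 1 + ε * β + η ε * inner ℝ w₂ ν with hD₂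
  have hdD₁ : HasDerivAt D₁ (-α) 0 := by
    have : HasDerivAt D₁ _ 0 := ((hasDerivAt_const (0 : ℝ) (1 : ℝ)).sub
      ((hasDerivAt_id (0 : ℝ)).mul_const α)).sub (hηd.mul_const (inner ℝ w₁ ν))
    exact this.congr_deriv (by simp)
  have hdD₂ : HasDerivAt D₂ β 0 := by
    have : HasDerivAt D₂ _ 0 := ((hasDerivAt_const (0 : ℝ) (1 : ℝ)).add
      ((hasDerivAt_id (0 : ℝ)).mul_const β)).add (hηd.mul_const (inner ℝ w₂ ν))
    exact this.congr_deriv (by simp)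
  have hD₁0 : D₁ 0 = 1 := by simp [hD₁, hη00]
  have hD₂0 : D₂ 0 = 1 := by simp [hD₂, hη00]
  have hdN : HasDerivAt (fun ε => √(1 + ε ^ 2 + η ε ^ 2)) 0 0 := by
    have h1 : HasDerivAt (fun ε : ℝ => 1 + ε ^ 2 + η ε ^ 2) 0 0 := by
      have : HasDerivAt (fun ε : ℝ => 1 + ε ^ 2 + η ε ^ 2) _ 0 :=
        ((hasDerivAt_const (0 : ℝ) (1 : ℝ)).add ((hasDerivAt_id (0 : ℝ)).pow 2)).add (hηd.pow 2)
      exact this.congr_deriv (by simp)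
    simpa [hη00] using h1.sqrt (by simp [hη00])
  have hdG : HasDerivAt (fun ε => √(1 + ε ^ 2 + η ε ^ 2) * (b / D₂ ε - a / D₁ ε))
      (-(b * β) - a * α) 0 := by
    have h1 := ((hasDerivAt_const (0 : ℝ) b).div hdD₂ (by rw [hD₂0]; norm_num)).sub
      ((hasDerivAt_const (0 : ℝ) a).div hdD₁ (by rw [hD₁0]; norm_num))
    refine (hdN.mul h1).congr_deriv ?_
    simp [hη00, hD₁0, hD₂0]
  have hpos₁ : ∀ᶠ ε in nhds (0 : ℝ), 0 < D₁ ε :=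
    hdD₁.continuousAt.eventually (lt_mem_nhds (by rw [hD₁0]; norm_num))
  have hpos₂ : ∀ᶠ ε in nhds (0 : ℝ), 0 < D₂ ε :=
    hdD₂.continuousAt.eventually (lt_mem_nhds (by rw [hD₂0]; norm_num))
  have hmin : IsLocalMin (fun ε => √(1 + ε ^ 2 + η ε ^ 2) * (b / D₂ ε - a / D₁ ε)) 0 := by
    have hlow : b - a ≤ lam x := by
      have hm0 := hηm 0 (by simpa using hδ.le)
      have hn0 := hηn 0 (by simpa using hδ.le)
      simp only [hη00, zero_smul, add_zero] at hm0 hn0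
      rw [← h x hx e he hm0 hn0]
      have h2 := dist_le_diam_of_mem (s := K ∩ {y | ∃ s : ℝ, y = x + s • e})
        (hK.isBounded.subset inter_subset_left) ⟨hb, b, rfl⟩ ⟨ha, a, rfl⟩
      rw [dist_add_left, dist_eq_norm, ← sub_smul, norm_smul, he, mul_one] at h2
      exact (le_abs_self _).trans h2
    filter_upwards [hnear, hpos₁, hpos₂] with ε hε h₁ h₂
    have h0 : √(1 + (0 : ℝ) ^ 2 + η 0 ^ 2) * (b / D₂ 0 - a / D₁ 0) = b - a := by
      simp [hη00, hD₁0, hD₂0]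
    rw [h0]
    refine hlow.trans ?_
    rw [← h.scaled hx (hd0 ε) (hηm ε hε) (hηn ε hε)]
    have hrange : ∀ s : ℝ, x + s • d ε ∈ K → a / D₁ ε ≤ s ∧ s ≤ b / D₂ ε := by
      intro s hs
      have k₁ := hw₁ _ hs
      have k₂ := hw₂ _ hs
      have e₁ : x + s • d ε - (x + a • e) = (s - a) • e + (s * ε) • f + (s * η ε) • ν := by
        rw [hd]; module
      have e₂ : x + s • d ε - (x + b • e) = (s - b) • e + (s * ε) • f + (s * η ε) • ν := by
        rw [hd]; module
      rw [e₁] at k₁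
      rw [e₂] at k₂
      simp only [inner_add_right, inner_smul_right, hw₁e, hw₂e, ← hα, ← hβ] at k₁ k₂
      rw [div_le_iff₀ h₁, le_div_iff₀ h₂]
      simp only [hD₁, hD₂]
      constructor <;> nlinarith
    obtain ⟨s0, hs0⟩ := hηm ε hε
    have hr0 := hrange s0 (hLK hs0)
    rw [← hnorm]
    refine diam_le_of_forall_dist_le (mul_nonneg (norm_nonneg _) (by linarith)) ?_
    rintro _ ⟨hy, s, rfl⟩ _ ⟨hz, s', rfl⟩
    rw [dist_add_left, dist_eq_norm, ← sub_smul, norm_smul, mul_comm]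
    refine mul_le_mul_of_nonneg_left ?_ (norm_nonneg _)
    have i₁ := hrange s hy
    have i₂ := hrange s' hz
    rw [Real.norm_eq_abs, abs_le]
    constructor <;> linarith
  have := hmin.hasDerivAt_eq_zero hdG
  linarith

/-- The standing assumptions on three convex bodies `L ⊆ int K`, `K ⊆ int M` in dimension at
least three. -/
structure Config (K L M : Set E) (lam : E → ℝ) : Prop where
  dim : 3 ≤ Module.finrank ℝ E
  Kcpt : IsCompact K
  Kconv : Convex ℝ K
  Lcpt : IsCompact L
  Lconv : Convex ℝ L
  Lint : (interior L).Nonempty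
  Mcpt : IsCompact M
  LK : L ⊆ interior K
  KM : K ⊆ interior M
  chord : EqualChords K L M lam

variable {K L M : Set E} {lam : E → ℝ}

lemma Config.Kint (h : Config K L M lam) : (interior K).Nonempty :=
  h.Lint.mono (interior_subset.trans h.LK)

lemma Config.mem_interior_of_touch (h : Config K L M lam) {p ν : E} (ht : Touch L p ν) :
    p ∈ interior K := h.LK (h.Lcpt.isClosed.frontier_subset ht.2.1)

lemma Config.notMem_of_frontier (h : Config K L M lam) {x : E} (hx : x ∈ frontier M) : x ∉ L :=
  fun hxL => hx.2 (h.KM (interior_subset (h.LK hxL)))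

/-- The relation of `chord_first_order` at a touched point. -/
lemma Config.first_order (h : Config K L M lam) {p ν e f w₁ w₂ : E} {X σ ρ : ℝ}
    (ht : Touch L p ν) (hsup : ∀ y ∈ L, inner ℝ ν (y - p) ≤ 0) (he : ‖e‖ = 1) (hf : ‖f‖ = 1)
    (hνe : inner ℝ ν e = 0) (hνf : inner ℝ ν f = 0) (hef : inner ℝ e f = 0) (hX : 0 < X)
    (hx : p - X • e ∈ frontier M) (ha : p - σ • e ∈ K) (hb : p + ρ • e ∈ K)
    (hw₁ : ∀ k ∈ K, inner ℝ w₁ (k - (p - σ • e)) ≤ 0) (hw₁e : inner ℝ w₁ e = -1)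
    (hw₂ : ∀ k ∈ K, inner ℝ w₂ (k - (p + ρ • e)) ≤ 0) (hw₂e : inner ℝ w₂ e = 1) :
    (X - σ) * inner ℝ w₁ f + (X + ρ) * inner ℝ w₂ f = 0 := by
  obtain ⟨hν, hp, r, hr, hball⟩ := ht
  have e₁ : p - X • e + (X - σ) • e = p - σ • e := by module
  have e₂ : p - X • e + (X + ρ) • e = p + ρ • e := by module
  refine chord_first_order (C := X / r) (δ := r / X) h.Kcpt (h.LK.trans interior_subset) h.chord
    hx hν he hf hνe hνf hef (by positivity) ?_ (by rwa [e₁]) (by rwa [e₂]) (by rwa [e₁]) hw₁e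
    (by rwa [e₂]) hw₂e
  intro ε hε
  refine exists_tilt h.Lcpt h.Lconv hsup hr hball hν he hf hνe hνf hef hX rfl
    (h.notMem_of_frontier hx) ?_
  rw [le_div_iff₀ hX] at hε
  calc ε ^ 2 * X ^ 2 = (|ε| * X) ^ 2 := by rw [mul_pow, sq_abs]
    _ ≤ r ^ 2 := by gcongr

/-- The section of `K` by the hyperplane through `p` with normal `ν` is the ball with centre `p`
and radius `R` in that hyperplane. -/
def IsDisc (K : Set E) (p ν : E) (R : ℝ) : Prop :=
  0 < R ∧ ∀ y, inner ℝ ν (y - p) = 0 → (y ∈ K ↔ dist y p ≤ R)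

/-- A boundary point of `K` in a tangent hyperplane lies on the boundary sphere of the disc. -/
lemma Config.dist_eq_of_frontier (h : Config K L M lam) {p ν x : E} {R : ℝ} (hp : Touch L p ν)
    (hR : IsDisc K p ν R) (hx : x ∈ frontier K) (hxν : inner ℝ ν (x - p) = 0) :
    dist x p = R := by
  have hpK := h.mem_interior_of_touch hp
  have hle := (hR.2 x hxν).mp (h.Kcpt.isClosed.frontier_subset hx)
  by_contra hne
  have hlt : dist x p < R := lt_of_le_of_ne hle hne
  have hxp : 0 < dist x p := dist_pos.mpr (by rintro rfl; exact hx.2 hpK)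
  have hy : p + (R / dist x p) • (x - p) ∈ K := by
    rw [hR.2 _ (by rw [add_sub_cancel_left, inner_smul_right, hxν, mul_zero]), dist_eq_norm,
      add_sub_cancel_left, norm_smul, ← dist_eq_norm, norm_div, Real.norm_of_nonneg hR.1.le,
      Real.norm_of_nonneg hxp.le, div_mul_cancel₀ _ hxp.ne']
  have := h.Kconv.combo_interior_closure_mem_interior hpK (subset_closure hy)
    (a := 1 - dist x p / R) (b := dist x p / R) (by rw [sub_pos, div_lt_one hR.1]; exact hlt)
    (div_nonneg hxp.le hR.1.le) (by ring)
  have hmul : dist x p / R * (R / dist x p) = 1 := by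
    have := hR.1.ne'
    field_simp
  have e : (1 - dist x p / R) • p + (dist x p / R) • (p + (R / dist x p) • (x - p)) = x := by
    rw [smul_add, smul_smul, hmul]
    module
  rw [e] at this
  exact hx.2 this

variable [FiniteDimensional ℝ E]

/-- At a touched point `p` with normal `ν`, the section of `K` by the tangent hyperplane is
supported, at its boundary point in direction `e` from `p`, by the hyperplane orthogonal to `e`:
comparing the rotations of the chord about both points where its line leaves `M` shows that every
support normal of `K` there is orthogonal to the directions `f ⊥ e` of the tangent hyperplane. -/
lemma Config.exists_radius (h : Config K L M lam) {p ν e : E} (ht : Touch L p ν) (he : ‖e‖ = 1)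
    (hνe : inner ℝ ν e = 0) :
    ∃ ρ : ℝ, 0 < ρ ∧ p + ρ • e ∈ K ∧
      ∀ k ∈ K, inner ℝ ν (k - p) = 0 → inner ℝ e (k - p) ≤ ρ := by
  have hsup := (ht.support h.Lconv h.Lint).1
  have hpK := h.mem_interior_of_touch ht
  have hpM := h.KM (interior_subset hpK)
  have he0 : e ≠ 0 := by rintro rfl; simp at he
  have hee : inner ℝ e e = 1 := by rw [real_inner_self_eq_norm_sq, he]; norm_num
  obtain ⟨ρ, hρ, hρK⟩ := exists_exit h.Kcpt hpK he0
  obtain ⟨σ, hσ, hσK⟩ := exists_exit h.Kcpt hpK (neg_ne_zero.mpr he0)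
  obtain ⟨Y, hY, hYM⟩ := exists_exit h.Mcpt hpM he0
  obtain ⟨X, hX, hXM⟩ := exists_exit h.Mcpt hpM (neg_ne_zero.mpr he0)
  rw [smul_neg, ← sub_eq_add_neg] at hσK hXM
  obtain ⟨v₁, hv₁, hv₁'⟩ := exists_support h.Kconv h.Kint hσK.2
  obtain ⟨v₂, hv₂, hv₂'⟩ := exists_support h.Kconv h.Kint hρK.2
  have hσm := h.Kcpt.isClosed.frontier_subset hσK
  have hρm := h.Kcpt.isClosed.frontier_subset hρK
  have hv₁e : inner ℝ v₁ e < 0 := by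
    have := hv₁' p hpK
    rw [sub_sub_cancel, inner_smul_right] at this
    by_contra hc
    push Not at hc
    nlinarith
  have hv₂e : 0 < inner ℝ v₂ e := by
    have := hv₂' p hpK
    rw [sub_add_cancel_left, inner_neg_right, inner_smul_right] at this
    by_contra hc
    push Not at hc
    nlinarith
  set w₁ := (-(inner ℝ v₁ e))⁻¹ • v₁ with hw₁d
  set w₂ := (inner ℝ v₂ e)⁻¹ • v₂ with hw₂d
  have hw₁e : inner ℝ w₁ e = -1 := by
    rw [hw₁d, real_inner_smul_left, inv_neg, neg_mul, inv_mul_cancel₀ hv₁e.ne]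
  have hw₂e : inner ℝ w₂ e = 1 := by
    rw [hw₂d, real_inner_smul_left, inv_mul_cancel₀ hv₂e.ne']
  have hw₁ : ∀ k ∈ K, inner ℝ w₁ (k - (p - σ • e)) ≤ 0 := by
    intro k hk
    rw [hw₁d, real_inner_smul_left]
    exact mul_nonpos_of_nonneg_of_nonpos (inv_nonneg.mpr (by linarith)) (hv₁ k hk)
  have hw₂ : ∀ k ∈ K, inner ℝ w₂ (k - (p + ρ • e)) ≤ 0 := by
    intro k hk
    rw [hw₂d, real_inner_smul_left]
    exact mul_nonpos_of_nonneg_of_nonpos (inv_nonneg.mpr hv₂e.le) (hv₂ k hk)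
  have horth : ∀ f : E, ‖f‖ = 1 → inner ℝ ν f = 0 → inner ℝ e f = 0 → inner ℝ w₂ f = 0 := by
    intro f hf hνf hef
    have q₁ := h.first_order ht hsup he hf hνe hνf hef hX hXM hσm hρm hw₁ hw₁e hw₂ hw₂e
    have q₂ := h.first_order (e := -e) (σ := ρ) (ρ := σ) (w₁ := w₂) (w₂ := w₁) ht hsup
      (by rwa [norm_neg]) hf (by rw [inner_neg_right, hνe, neg_zero]) hνf
      (by rw [inner_neg_left, hef, neg_zero]) hY (by rwa [smul_neg, sub_neg_eq_add])
      (by rwa [smul_neg, sub_neg_eq_add]) (by rwa [smul_neg, ← sub_eq_add_neg])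
      (by rwa [smul_neg, sub_neg_eq_add]) (by rw [inner_neg_right, hw₂e])
      (by rwa [smul_neg, ← sub_eq_add_neg]) (by rw [inner_neg_right, hw₁e, neg_neg])
    have q₃ : (X + Y) * (inner ℝ w₁ f + inner ℝ w₂ f) = 0 := by linarith
    have q₄ : inner ℝ w₁ f + inner ℝ w₂ f = 0 :=
      (mul_eq_zero.mp q₃).resolve_left (by positivity)
    have q₅ : (σ + ρ) * inner ℝ w₂ f = 0 := by
      have : inner ℝ w₁ f = -inner ℝ w₂ f := by linarith
      rw [this] at q₁
      linarith
    exact (mul_eq_zero.mp q₅).resolve_left (by positivity)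
  refine ⟨ρ, hρ, hρm, fun k hk hkν => ?_⟩
  set c := inner ℝ e (k - p) with hc
  set g := k - p - c • e with hg
  have hg0 : inner ℝ w₂ g = 0 := by
    by_cases hgz : g = 0
    · rw [hgz, inner_zero_right]
    have hgn : ‖g‖ ≠ 0 := norm_ne_zero_iff.mpr hgz
    have := horth (‖g‖⁻¹ • g) (by rw [norm_smul, norm_inv, norm_norm, inv_mul_cancel₀ hgn])
      (by rw [inner_smul_right, hg, inner_sub_right, inner_smul_right, hkν, hνe]; simp)
      (by rw [inner_smul_right, hg, inner_sub_right, inner_smul_right, ← hc, hee]; simp)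
    rw [inner_smul_right] at this
    exact (mul_eq_zero.mp this).resolve_left (inv_ne_zero hgn)
  have h1 := hw₂ k hk
  have h2 : k - (p + ρ • e) = g + (c - ρ) • e := by rw [hg]; module
  rw [h2, inner_add_right, hg0, inner_smul_right, hw₂e] at h1
  linarith

/-- The inequality says that `r` varies at most quadratically, so its derivative vanishes. -/
lemma const_of_mul_cos_le {r : ℝ → ℝ} {B : ℝ} (hB : ∀ t, r t ≤ B) (h0 : ∀ t, 0 < r t)
    (h : ∀ s t, r s * Real.cos (s - t) ≤ r t) (s t : ℝ) : r s = r t := by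
  have key : ∀ s t, r s - r t ≤ B * (s - t) ^ 2 := by
    intro s t
    have h1 := Real.one_sub_sq_div_two_le_cos (x := s - t)
    have h2 : r s * (1 - (s - t) ^ 2 / 2) ≤ r t :=
      (mul_le_mul_of_nonneg_left h1 (h0 s).le).trans (h s t)
    nlinarith [hB s, h0 s, sq_nonneg (s - t), mul_le_mul_of_nonneg_right (hB s) (sq_nonneg (s - t))]
  have hd : ∀ t, HasDerivAt r 0 t := by
    intro t
    rw [hasDerivAt_iff_isLittleO]
    simp only [smul_zero, sub_zero]
    refine Asymptotics.IsBigO.trans_isLittleO (g := fun s => ‖s - t‖ ^ 2) ?_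
      (Asymptotics.isLittleO_pow_sub_sub t (by norm_num))
    refine Asymptotics.IsBigO.of_bound B (Filter.Eventually.of_forall fun s => ?_)
    rw [norm_pow, norm_norm, Real.norm_eq_abs, Real.norm_eq_abs, sq_abs, abs_le]
    have k1 := key s t
    have k2 := key t s
    constructor <;> nlinarith
  exact is_const_of_deriv_eq_zero (fun t => (hd t).differentiableAt) (fun t => (hd t).deriv) s t

/-- Tangent sections of `K` at touched points are balls centred at the point of contact. -/
lemma Config.exists_disc (h : Config K L M lam) {p ν : E} (ht : Touch L p ν) :
    ∃ R, IsDisc K p ν R := by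
  have hex := fun (e : E) (he : ‖e‖ = 1) (hνe : inner ℝ ν e = 0) => h.exists_radius ht he hνe
  choose! ρ hρ0 hρK hρs using hex
  have hcomp : ∀ e e' : E, ‖e‖ = 1 → inner ℝ ν e = 0 → ‖e'‖ = 1 → inner ℝ ν e' = 0 →
      ρ e' * inner ℝ e e' ≤ ρ e := by
    intro e e' he hνe he' hνe'
    have := hρs e he hνe _ (hρK e' he' hνe')
      (by rw [add_sub_cancel_left, inner_smul_right, hνe', mul_zero])
    rwa [add_sub_cancel_left, inner_smul_right] at this
  obtain ⟨C, hC⟩ := h.Kcpt.isBounded.exists_norm_le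
  have hbd : ∀ e : E, ‖e‖ = 1 → inner ℝ ν e = 0 → ρ e ≤ C + ‖p‖ := by
    intro e he hνe
    have h1 := hC _ (hρK e he hνe)
    have h2 := norm_sub_le (p + ρ e • e) p
    rw [add_sub_cancel_left, norm_smul, he, mul_one] at h2
    exact (le_abs_self _).trans (h2.trans (by linarith))
  -- two orthogonal unit directions are joined by a great circle
  have hcirc : ∀ e g : E, ‖e‖ = 1 → inner ℝ ν e = 0 → ‖g‖ = 1 → inner ℝ ν g = 0 →
      inner ℝ e g = 0 → ∀ θ : ℝ, ρ (Real.cos θ • e + Real.sin θ • g) = ρ e := by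
    intro e g he hνe hg hνg heg θ
    have hee : inner ℝ e e = 1 := by rw [real_inner_self_eq_norm_sq, he]; norm_num
    have hgg : inner ℝ g g = 1 := by rw [real_inner_self_eq_norm_sq, hg]; norm_num
    have hge : inner ℝ g e = 0 := by rw [real_inner_comm]; exact heg
    have hin : ∀ s t : ℝ, inner ℝ (Real.cos t • e + Real.sin t • g)
        (Real.cos s • e + Real.sin s • g) = Real.cos (s - t) := by
      intro s t
      simp only [inner_add_right, inner_add_left, inner_smul_right, real_inner_smul_left,
        hee, hgg, hge, heg, Real.cos_sub]
      ring
    have hn : ∀ t : ℝ, ‖Real.cos t • e + Real.sin t • g‖ = 1 := by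
      intro t
      rw [@norm_eq_sqrt_real_inner, hin]; simp
    have hν' : ∀ t : ℝ, inner ℝ ν (Real.cos t • e + Real.sin t • g) = 0 := by
      intro t
      simp only [inner_add_right, inner_smul_right, hνe, hνg]; ring
    have := const_of_mul_cos_le (r := fun t => ρ (Real.cos t • e + Real.sin t • g))
      (fun t => hbd _ (hn t) (hν' t)) (fun t => hρ0 _ (hn t) (hν' t))
      (fun s t => by
        have := hcomp _ _ (hn t) (hν' t) (hn s) (hν' s)
        rwa [hin] at this) θ 0
    simpa using this
  have hconst : ∀ e e' : E, ‖e‖ = 1 → inner ℝ ν e = 0 → ‖e'‖ = 1 → inner ℝ ν e' = 0 →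
      ρ e' = ρ e := by
    intro e e' he hνe he' hνe'
    have hee : inner ℝ e e = 1 := by rw [real_inner_self_eq_norm_sq, he]; norm_num
    have hee' : inner ℝ e' e' = 1 := by rw [real_inner_self_eq_norm_sq, he']; norm_num
    set c := inner ℝ e e' with hc
    have hc' : inner ℝ e' e = c := by rw [real_inner_comm]
    set g0 := e' - c • e with hg0
    have hg0n : ‖g0‖ ^ 2 = 1 - c ^ 2 := by
      rw [← real_inner_self_eq_norm_sq, hg0]
      simp only [inner_sub_right, inner_sub_left, inner_smul_right, real_inner_smul_left,
        hee, hee', ← hc, hc']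
      ring
    have hg0e : inner ℝ e g0 = 0 := by
      rw [hg0, inner_sub_right, inner_smul_right, hee, ← hc]; ring
    have hg0ν : inner ℝ ν g0 = 0 := by
      rw [hg0, inner_sub_right, inner_smul_right, hνe, hνe']; ring
    have hg : ∃ g : E, ‖g‖ = 1 ∧ inner ℝ ν g = 0 ∧ inner ℝ e g = 0 ∧ g0 = ‖g0‖ • g := by
      by_cases hz : g0 = 0
      · obtain ⟨g, hg1, hg2, hg3⟩ := exists_unit_orthogonal_pair h.dim ν e
        exact ⟨g, hg1, hg2, hg3, by simp [hz]⟩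
      · have hzn : ‖g0‖ ≠ 0 := norm_ne_zero_iff.mpr hz
        refine ⟨‖g0‖⁻¹ • g0, ?_, ?_, ?_, ?_⟩
        · rw [norm_smul, norm_inv, norm_norm, inv_mul_cancel₀ hzn]
        · rw [inner_smul_right, hg0ν, mul_zero]
        · rw [inner_smul_right, hg0e, mul_zero]
        · rw [smul_smul, mul_inv_cancel₀ hzn, one_smul]
    obtain ⟨g, hg1, hg2, hg3, hg4⟩ := hg
    have hc1 : c ^ 2 ≤ 1 := by nlinarith [sq_nonneg ‖g0‖]
    have := hcirc e g he hνe hg1 hg2 hg3 (Real.arccos c)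
    rw [Real.cos_arccos (by nlinarith) (by nlinarith), Real.sin_arccos, ← hg0n,
      Real.sqrt_sq (norm_nonneg _), ← hg4, hg0, add_sub_cancel] at this
    exact this
  obtain ⟨e0, he0, hνe0, -⟩ := exists_unit_orthogonal_pair h.dim ν ν
  refine ⟨ρ e0, hρ0 e0 he0 hνe0, fun y hy => ?_⟩
  by_cases hyp : y = p
  · rw [hyp, dist_self]
    exact ⟨fun _ => (hρ0 e0 he0 hνe0).le, fun _ => interior_subset (h.mem_interior_of_touch ht)⟩
  have hn : 0 < ‖y - p‖ := norm_pos_iff.mpr (sub_ne_zero.mpr hyp)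
  set e := ‖y - p‖⁻¹ • (y - p) with hed
  have he : ‖e‖ = 1 := by rw [hed, norm_smul, norm_inv, norm_norm, inv_mul_cancel₀ hn.ne']
  have hνe : inner ℝ ν e = 0 := by rw [hed, inner_smul_right, hy, mul_zero]
  have hye : y = p + ‖y - p‖ • e := by
    rw [hed, smul_smul, mul_inv_cancel₀ hn.ne', one_smul, add_sub_cancel]
  rw [← hconst e0 e he0 hνe0 he hνe, dist_eq_norm]
  constructor
  · intro hyK
    have := hρs e he hνe y hyK hy
    rw [hed, real_inner_smul_left, real_inner_self_eq_norm_sq] at this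
    have h2 : ‖y - p‖⁻¹ * ‖y - p‖ ^ 2 = ‖y - p‖ := by field_simp
    rwa [h2] at this
  · intro hle
    have hR := hρ0 e he hνe
    have := h.Kconv (interior_subset (h.mem_interior_of_touch ht)) (hρK e he hνe)
      (a := 1 - ‖y - p‖ / ρ e) (b := ‖y - p‖ / ρ e)
      (by rw [sub_nonneg, div_le_one hR]; exact hle) (by positivity) (by ring)
    convert this using 1
    have h3 : ‖y - p‖ / ρ e * ρ e = ‖y - p‖ := by field_simp
    have h4 : (1 - ‖y - p‖ / ρ e) • p + (‖y - p‖ / ρ e) • (p + ρ e • e)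
      = p + (‖y - p‖ / ρ e * ρ e) • e := by module
    rw [h4, h3]
    exact hye

/-! ### Comparing two tangent sections -/

/-- The chord length attached to a point of `∂M` in a tangent hyperplane is the diameter of the
disc cut on `K`, since the line joining that point to the contact point supports `L`. -/
lemma Config.lam_eq (h : Config K L M lam) {p ν x : E} {R : ℝ} (ht : Touch L p ν)
    (hR : IsDisc K p ν R) (hx : x ∈ frontier M) (hxν : inner ℝ ν (x - p) = 0) :
    lam x = 2 * R := by
  have hpL := h.Lcpt.isClosed.frontier_subset ht.2.1
  have hpx : p - x ≠ 0 := by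
    intro h0
    rw [sub_eq_zero] at h0
    exact h.notMem_of_frontier hx (h0 ▸ hpL)
  have hplane : ∀ s : ℝ, inner ℝ ν (x + s • (p - x) - p) = 0 := by
    intro s
    have : x + s • (p - x) - p = (1 - s) • (x - p) := by module
    rw [this, inner_smul_right, hxν, mul_zero]
  rw [← h.chord.scaled hx hpx ⟨1, by simpa using hpL⟩ (fun s hs => by
    have := (ht.support h.Lconv h.Lint).2 _ hs
    rw [hplane] at this
    exact lt_irrefl _ this)]
  apply le_antisymm
  · refine diam_le_of_forall_dist_le (by linarith [hR.1]) ?_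
    rintro _ ⟨hy, s, rfl⟩ _ ⟨hz, s', rfl⟩
    have h1 := (hR.2 _ (hplane s)).mp hy
    have h2 := (hR.2 _ (hplane s')).mp hz
    have h3 := dist_triangle_right (x + s • (p - x)) (x + s' • (p - x)) p
    linarith
  · have hn : 0 < ‖p - x‖ := norm_pos_iff.mpr hpx
    have hpt : ∀ τ : ℝ, |τ| = R → x + (1 + τ / ‖p - x‖) • (p - x) ∈ K := by
      intro τ hτ
      rw [hR.2 _ (hplane _), dist_eq_norm]
      have : x + (1 + τ / ‖p - x‖) • (p - x) - p = (τ / ‖p - x‖) • (p - x) := by module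
      rw [this, norm_smul, norm_div, norm_norm, div_mul_cancel₀ _ hn.ne', Real.norm_eq_abs, hτ]
    have h2 := dist_le_diam_of_mem (s := K ∩ {y | ∃ s : ℝ, y = x + s • (p - x)})
      (h.Kcpt.isBounded.subset inter_subset_left)
      ⟨hpt R (abs_of_pos hR.1), _, rfl⟩ ⟨hpt (-R) (by rw [abs_neg, abs_of_pos hR.1]), _, rfl⟩
    rw [dist_add_left, dist_eq_norm, ← sub_smul, norm_smul] at h2
    have h3 : (1 + R / ‖p - x‖ - (1 + -R / ‖p - x‖)) = 2 * R / ‖p - x‖ := by ring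
    rw [h3, norm_div, norm_norm, div_mul_cancel₀ _ hn.ne', Real.norm_eq_abs] at h2
    exact (le_abs_self _).trans h2

/-- Two monic quadratics that are nonpositive on the same set, containing `0`, coincide. -/
lemma quad_eq {a b A B : ℝ} (hA : A ≤ 0)
    (h : ∀ s : ℝ, s ^ 2 - 2 * s * a + A ≤ 0 ↔ s ^ 2 - 2 * s * b + B ≤ 0) : a = b ∧ A = B := by
  have hB : B ≤ 0 := by simpa using (h 0).mp (by simpa using hA)
  have sa := Real.sq_sqrt (show 0 ≤ a ^ 2 - A by nlinarith [sq_nonneg a])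
  have sb := Real.sq_sqrt (show 0 ≤ b ^ 2 - B by nlinarith [sq_nonneg b])
  have na := Real.sqrt_nonneg (a ^ 2 - A)
  have nb := Real.sqrt_nonneg (b ^ 2 - B)
  set α := √(a ^ 2 - A)
  set β := √(b ^ 2 - B)
  have h1 := (h (a + α)).mp (by nlinarith)
  have h2 := (h (a - α)).mp (by nlinarith)
  have h3 := (h (b + β)).mpr (by nlinarith)
  have h4 := (h (b - β)).mpr (by nlinarith)
  have k1 := abs_le_of_sq_le_sq' (show (a + α - b) ^ 2 ≤ β ^ 2 by nlinarith) nb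
  have k2 := abs_le_of_sq_le_sq' (show (a - α - b) ^ 2 ≤ β ^ 2 by nlinarith) nb
  have k3 := abs_le_of_sq_le_sq' (show (b + β - a) ^ 2 ≤ α ^ 2 by nlinarith) na
  have k4 := abs_le_of_sq_le_sq' (show (b - β - a) ^ 2 ≤ α ^ 2 by nlinarith) na
  have hab : a = b := by linarith [k1.2, k2.1, k3.2, k4.1]
  refine ⟨hab, ?_⟩
  have hαβ : α = β := by subst hab; linarith [k1.2, k3.2]
  rw [hαβ] at sa
  rw [hab] at sa
  linarith

/-- If two tangent sections of `K` have a common point `y₀`, they cut the same ball on the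
intersection of the two hyperplanes, which has dimension at least one. Hence they have the same
radius, and the contact points differ by a multiple of the difference of the normals. -/
lemma Config.pair_of_common (h : Config K L M lam) {p ν q μ y₀ : E} {R R' : ℝ}
    (hp : Touch L p ν) (hR : IsDisc K p ν R) (hq : Touch L q μ) (hR' : IsDisc K q μ R')
    (hyK : y₀ ∈ K) (hyν : inner ℝ ν (y₀ - p) = 0) (hyμ : inner ℝ μ (y₀ - q) = 0) :
    R = R' ∧ ∃ t : ℝ, p - q = t • (ν - μ) := by
  have hline : ∀ v : E, ‖v‖ = 1 → inner ℝ ν v = 0 → inner ℝ μ v = 0 →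
      inner ℝ v (p - q) = 0 ∧ ‖y₀ - p‖ ^ 2 - R ^ 2 = ‖y₀ - q‖ ^ 2 - R' ^ 2 := by
    intro v hv hνv hμv
    have expand : ∀ (z : E) (ρ : ℝ), 0 < ρ → ∀ s : ℝ, dist (y₀ + s • v) z ≤ ρ ↔
        s ^ 2 - 2 * s * inner ℝ v (z - y₀) + (‖y₀ - z‖ ^ 2 - ρ ^ 2) ≤ 0 := by
      intro z ρ hρ s
      have h1 : ‖y₀ + s • v - z‖ ^ 2
          = s ^ 2 - 2 * s * inner ℝ v (z - y₀) + ‖y₀ - z‖ ^ 2 := by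
        have : y₀ + s • v - z = (y₀ - z) + s • v := by abel
        rw [this, norm_add_sq_real, norm_smul, hv, inner_smul_right, real_inner_comm,
          ← neg_sub z y₀, inner_neg_right, Real.norm_eq_abs, mul_one, sq_abs]
        ring
      rw [dist_eq_norm, ← sq_le_sq₀ (norm_nonneg _) hρ.le, h1]
      constructor <;> intro h <;> linarith
    have hν' : ∀ s : ℝ, inner ℝ ν (y₀ + s • v - p) = 0 := by
      intro s
      rw [add_sub_right_comm, inner_add_right, hyν, inner_smul_right, hνv]; ring
    have hμ' : ∀ s : ℝ, inner ℝ μ (y₀ + s • v - q) = 0 := by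
      intro s
      rw [add_sub_right_comm, inner_add_right, hyμ, inner_smul_right, hμv]; ring
    have hA : ‖y₀ - p‖ ^ 2 - R ^ 2 ≤ 0 := by
      have := (hR.2 _ hyν).mp hyK
      rw [dist_eq_norm] at this
      nlinarith [norm_nonneg (y₀ - p), hR.1]
    obtain ⟨h1, h2⟩ := quad_eq (a := inner ℝ v (p - y₀)) (b := inner ℝ v (q - y₀))
        (B := ‖y₀ - q‖ ^ 2 - R' ^ 2) hA fun s => by
      rw [← expand p R hR.1 s, ← expand q R' hR'.1 s, ← hR.2 _ (hν' s), ← hR'.2 _ (hμ' s)]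
    refine ⟨?_, h2⟩
    have : p - q = (p - y₀) - (q - y₀) := by abel
    rw [this, inner_sub_right, h1, sub_self]
  obtain ⟨v, hv, hνv, hμv⟩ := exists_unit_orthogonal_pair h.dim ν μ
  have hv0 : v ≠ 0 := by rintro rfl; simp at hv
  have hRR : R = R' := by
    obtain ⟨s, -, hs⟩ := exists_exit h.Mcpt (h.KM hyK) hv0
    have h1 := h.lam_eq hp hR hs
      (by rw [add_sub_right_comm, inner_add_right, hyν, inner_smul_right, hνv]; ring)
    have h2 := h.lam_eq hq hR' hs
      (by rw [add_sub_right_comm, inner_add_right, hyμ, inner_smul_right, hμv]; ring)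
    linarith
  refine ⟨hRR, ?_⟩
  have hdist := (hline v hv hνv hμv).2
  rw [hRR, sub_left_inj] at hdist
  have hspan : p - q ∈ Submodule.span ℝ {ν, μ} := by
    rw [← Submodule.orthogonal_orthogonal (Submodule.span ℝ {ν, μ}), Submodule.mem_orthogonal]
    intro u hu
    by_cases hu0 : u = 0
    · rw [hu0, inner_zero_left]
    have hun : ‖u‖ ≠ 0 := norm_ne_zero_iff.mpr hu0
    have hu' := (Submodule.mem_orthogonal _ u).mp hu
    have := (hline (‖u‖⁻¹ • u) (by rw [norm_smul, norm_inv, norm_norm, inv_mul_cancel₀ hun])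
      (by rw [inner_smul_right, hu' ν (Submodule.subset_span (by simp)), mul_zero])
      (by rw [inner_smul_right, hu' μ (Submodule.subset_span (by simp)), mul_zero])).1
    rw [real_inner_smul_left] at this
    exact (mul_eq_zero.mp this).resolve_left (inv_ne_zero hun)
  obtain ⟨α, β, hw⟩ := Submodule.mem_span_pair.mp hspan
  set k := inner ℝ ν μ with hk
  have hνν : inner ℝ ν ν = 1 := by rw [real_inner_self_eq_norm_sq, hp.1]; norm_num
  have hμμ : inner ℝ μ μ = 1 := by rw [real_inner_self_eq_norm_sq, hq.1]; norm_num
  have hμν : inner ℝ μ ν = k := by rw [real_inner_comm]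
  have hνw : inner ℝ ν (p - q) = α + β * k := by
    rw [← hw, inner_add_right, inner_smul_right, inner_smul_right, hνν, ← hk]; ring
  have hμw : inner ℝ μ (p - q) = α * k + β := by
    rw [← hw, inner_add_right, inner_smul_right, inner_smul_right, hμν, hμμ]; ring
  have hsq : α ^ 2 = β ^ 2 := by
    have e1 : inner ℝ ν (y₀ - q) = α + β * k := by
      rw [← hνw, ← sub_add_sub_cancel y₀ p q, inner_add_right, hyν, zero_add]
    have e2 : inner ℝ μ (y₀ - p) = -(α * k + β) := by
      rw [← hμw, ← sub_add_sub_cancel y₀ q p, inner_add_right, hyμ, zero_add, ← neg_sub p q,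
        inner_neg_right]
    have e3 : ‖y₀ - q‖ ^ 2 - ‖y₀ - p‖ ^ 2 = inner ℝ (p - q) ((y₀ - p) + (y₀ - q)) := by
      have key : ∀ a b : E, ‖a‖ ^ 2 - ‖b‖ ^ 2 = inner ℝ (a - b) (b + a) := by
        intro a b
        rw [inner_sub_left, inner_add_right, inner_add_right, real_inner_self_eq_norm_sq,
          real_inner_self_eq_norm_sq, real_inner_comm a b]
        ring
      rw [key, sub_sub_sub_cancel_left]
    rw [← hw, inner_add_left, real_inner_smul_left, real_inner_smul_left, inner_add_right,
      inner_add_right, hyν, hyμ, e1, e2, hdist] at e3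
    nlinarith
  have s1 : 0 ≤ inner ℝ ν (p - q) := by
    have := (hp.support h.Lconv h.Lint).1 q (h.Lcpt.isClosed.frontier_subset hq.2.1)
    rw [← neg_sub p q, inner_neg_right] at this
    linarith
  have s2 : inner ℝ μ (p - q) ≤ 0 :=
    (hq.support h.Lconv h.Lint).1 p (h.Lcpt.isClosed.frontier_subset hp.2.1)
  rcases sq_eq_sq_iff_eq_or_eq_neg.mp hsq with hab | hab
  · -- here both products vanish, so `p - q` is orthogonal to both normals
    refine ⟨0, ?_⟩
    rw [zero_smul, ← inner_self_eq_zero (𝕜 := ℝ)]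
    have z1 : inner ℝ ν (p - q) = 0 := by
      rw [hab] at hνw hμw
      linarith
    have z2 : inner ℝ μ (p - q) = 0 := by
      rw [hab] at hνw hμw
      linarith
    conv_lhs => rw [← hw]
    rw [hw, ← hw, inner_add_left, real_inner_smul_left, real_inner_smul_left, hw, z1, z2]
    ring
  · exact ⟨α, by rw [← hw, show β = -α by linarith]; module⟩

/-- Two tangent sections at nearby touched points meet. -/
lemma Config.exists_common (h : Config K L M lam) {p ν q μ : E} {R R' R₀ : ℝ}
    (hp : Touch L p ν) (hR : IsDisc K p ν R) (hq : Touch L q μ) (hR' : IsDisc K q μ R')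
    (hR₀ : 0 < R₀) (hRR : R₀ ≤ R) (hRR' : R₀ ≤ R') (hsum : 0 < ‖ν + μ‖)
    (hpq : ‖p - q‖ ≤ R₀ * ‖ν + μ‖) :
    ∃ y₀ ∈ K, inner ℝ ν (y₀ - p) = 0 ∧ inner ℝ μ (y₀ - q) = 0 := by
  have hpL := h.Lcpt.isClosed.frontier_subset hp.2.1
  have hqL := h.Lcpt.isClosed.frontier_subset hq.2.1
  have s1 : inner ℝ ν (q - p) ≤ 0 := (hp.support h.Lconv h.Lint).1 q hqL
  have s2 : inner ℝ μ (p - q) ≤ 0 := (hq.support h.Lconv h.Lint).1 p hpL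
  by_cases hνμ : ν = μ
  · refine ⟨p, interior_subset (h.mem_interior_of_touch hp), by simp, ?_⟩
    rw [← hνμ] at s2 ⊢
    rw [← neg_sub p q, inner_neg_right] at s1
    linarith
  set k := inner ℝ ν μ with hk
  have hνν : inner ℝ ν ν = 1 := by rw [real_inner_self_eq_norm_sq, hp.1]; norm_num
  have hμμ : inner ℝ μ μ = 1 := by rw [real_inner_self_eq_norm_sq, hq.1]; norm_num
  have hμν : inner ℝ μ ν = k := by rw [real_inner_comm]
  have hplus : ‖ν + μ‖ ^ 2 = 2 * (1 + k) := by
    rw [norm_add_sq_real, hp.1, hq.1, ← hk]; ring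
  have hminus : ‖ν - μ‖ ^ 2 = 2 * (1 - k) := by
    rw [norm_sub_sq_real, hp.1, hq.1, ← hk]; ring
  have hmpos : 0 < ‖ν - μ‖ := norm_pos_iff.mpr (sub_ne_zero.mpr hνμ)
  have k1 : 0 < 1 + k := by nlinarith
  have k2 : 0 < 1 - k := by nlinarith
  have hS2 : 0 < 1 - k ^ 2 := by nlinarith
  set S := √(1 - k ^ 2) with hS
  have hSpos : 0 < S := Real.sqrt_pos.mpr hS2
  have hSsq : S ^ 2 = 1 - k ^ 2 := Real.sq_sqrt hS2.le
  -- the centre of at least one of the discs is within its radius of the other hyperplane,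
  -- measured inside its own hyperplane
  have hcase : -(inner ℝ μ (p - q)) ≤ R * S ∨ -(inner ℝ ν (q - p)) ≤ R' * S := by
    by_contra! hc
    have h1 : inner ℝ (ν - μ) (p - q) ≤ ‖ν - μ‖ * ‖p - q‖ := real_inner_le_norm _ _
    rw [inner_sub_left, ← neg_sub q p, inner_neg_right ν] at h1
    rw [neg_sub q p] at h1
    have h2 : 2 * R₀ * S < ‖ν - μ‖ * ‖p - q‖ := by nlinarith
    have h3 : ‖ν - μ‖ * ‖p - q‖ ≤ ‖ν - μ‖ * (R₀ * ‖ν + μ‖) := by gcongr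
    have h4 : 2 * S < ‖ν - μ‖ * ‖ν + μ‖ := by
      by_contra hc'
      push Not at hc'
      nlinarith
    have h5 : (2 * S) ^ 2 < (‖ν - μ‖ * ‖ν + μ‖) ^ 2 := by gcongr
    rw [mul_pow, mul_pow, hSsq, hplus, hminus] at h5
    nlinarith
  rcases hcase with hc | hc
  · set s := -(inner ℝ μ (p - q)) / (1 - k ^ 2) with hs
    have hs0 : 0 ≤ s := div_nonneg (by linarith) hS2.le
    have e1 : inner ℝ ν (p + s • (μ - k • ν) - p) = 0 := by
      rw [add_sub_cancel_left, inner_smul_right, inner_sub_right, inner_smul_right, hνν, ← hk]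
      ring
    refine ⟨p + s • (μ - k • ν), ?_, e1, ?_⟩
    · rw [hR.2 _ e1, dist_eq_norm, add_sub_cancel_left, norm_smul, Real.norm_of_nonneg hs0]
      have : ‖μ - k • ν‖ = S := by
        rw [hS, @norm_eq_sqrt_real_inner]
        congr 1
        simp only [inner_sub_right, inner_sub_left, inner_smul_right, real_inner_smul_left,
          hνν, hμμ, hμν, ← hk]
        ring
      rw [this, hs, ← hSsq, div_mul_eq_mul_div, div_le_iff₀ (by positivity)]
      nlinarith
    · rw [add_sub_right_comm, inner_add_right, inner_smul_right, inner_sub_right μ μ,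
        inner_smul_right, hμμ, hμν, hs]
      field_simp
      ring
  · set s := -(inner ℝ ν (q - p)) / (1 - k ^ 2) with hs
    have hs0 : 0 ≤ s := div_nonneg (by linarith) hS2.le
    have e1 : inner ℝ μ (q + s • (ν - k • μ) - q) = 0 := by
      rw [add_sub_cancel_left, inner_smul_right, inner_sub_right, inner_smul_right, hμμ, hμν]
      ring
    refine ⟨q + s • (ν - k • μ), ?_, ?_, e1⟩
    · rw [hR'.2 _ e1, dist_eq_norm, add_sub_cancel_left, norm_smul, Real.norm_of_nonneg hs0]
      have : ‖ν - k • μ‖ = S := by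
        rw [hS, @norm_eq_sqrt_real_inner]
        congr 1
        simp only [inner_sub_right, inner_sub_left, inner_smul_right, real_inner_smul_left,
          hνν, hμμ, hμν, ← hk]
        ring
      rw [this, hs, ← hSsq, div_mul_eq_mul_div, div_le_iff₀ (by positivity)]
      nlinarith
    · rw [add_sub_right_comm, inner_add_right, inner_smul_right, inner_sub_right ν ν,
        inner_smul_right, hνν, ← hk, hs]
      field_simp
      ring

/-- There is a uniform distance below which two touched points can be compared. -/
lemma Config.exists_delta (h : Config K L M lam) :
    ∃ δ : ℝ, 0 < δ ∧ ∀ p ν q μ R R', Touch L p ν → IsDisc K p ν R → Touch L q μ →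
      IsDisc K q μ R' → dist p q ≤ δ → R = R' ∧ ∃ t : ℝ, p - q = t • (ν - μ) := by
  obtain ⟨R₀, hR₀, hthick⟩ := h.Lcpt.exists_cthickening_subset_open isOpen_interior h.LK
  have hRlow : ∀ p ν R, Touch L p ν → IsDisc K p ν R → R₀ ≤ R := by
    intro p ν R hp hR
    have hpL := h.Lcpt.isClosed.frontier_subset hp.2.1
    obtain ⟨v, hv, hνv, -⟩ := exists_unit_orthogonal_pair h.dim ν ν
    have hd : dist (p + R₀ • v) p = R₀ := by
      rw [dist_eq_norm, add_sub_cancel_left, norm_smul, hv, mul_one, Real.norm_of_nonneg hR₀.le]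
    have hmem : p + R₀ • v ∈ K := interior_subset (hthick
      (mem_cthickening_of_dist_le _ p _ _ hpL hd.le))
    rw [hR.2 _ (by rw [add_sub_cancel_left, inner_smul_right, hνv, mul_zero]), hd] at hmem
    exact hmem
  obtain ⟨o, ho⟩ := h.Lint
  obtain ⟨r₀, hr₀, hball⟩ := Metric.nhds_basis_closedBall.mem_iff.mp
    (mem_interior_iff_mem_nhds.mp ho)
  obtain ⟨C, hC⟩ := h.Lcpt.isBounded.exists_norm_le
  set D := C + ‖o‖ + 1 with hD
  have hDpos : 0 < D := by
    have := (norm_nonneg o).trans (hC o (interior_subset ho))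
    positivity
  have hlow : ∀ p ν, Touch L p ν → r₀ ≤ inner ℝ ν (p - o) := by
    intro p ν hp
    have h1 : o + r₀ • ν ∈ L := hball (by
      rw [mem_closedBall, dist_eq_norm, add_sub_cancel_left, norm_smul, hp.1, mul_one,
        Real.norm_of_nonneg hr₀.le])
    have h2 := (hp.support h.Lconv ⟨o, ho⟩).1 _ h1
    have h3 : o + r₀ • ν - p = r₀ • ν - (p - o) := by abel
    rw [h3, inner_sub_right, inner_smul_right, real_inner_self_eq_norm_sq, hp.1] at h2
    linarith
  refine ⟨min r₀ (R₀ * (r₀ / D)), by positivity, fun p ν q μ R R' hp hR hq hR' hpq => ?_⟩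
  rw [dist_eq_norm] at hpq
  have hpq1 : ‖p - q‖ ≤ r₀ := hpq.trans (min_le_left _ _)
  have hpq2 : ‖p - q‖ ≤ R₀ * (r₀ / D) := hpq.trans (min_le_right _ _)
  have hsum : r₀ / D ≤ ‖ν + μ‖ := by
    have h1 := hlow p ν hp
    have h2 := hlow q μ hq
    have h3 := real_inner_le_norm (ν + μ) (p - o)
    have h4 : inner ℝ (ν + μ) (p - o)
        = inner ℝ ν (p - o) + inner ℝ μ (q - o) + inner ℝ μ (p - q) := by
      rw [inner_add_left, ← sub_add_sub_cancel p q o, inner_add_right μ]; ring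
    have h5 := (abs_le.mp (abs_real_inner_le_norm μ (p - q))).1
    rw [hq.1, one_mul] at h5
    have h6 : ‖p - o‖ ≤ D := by
      have := hC p (h.Lcpt.isClosed.frontier_subset hp.2.1)
      exact (norm_sub_le _ _).trans (by rw [hD]; linarith)
    rw [div_le_iff₀ hDpos]
    have h7 : ‖ν + μ‖ * ‖p - o‖ ≤ ‖ν + μ‖ * D := by gcongr
    linarith
  obtain ⟨y₀, hyK, hyν, hyμ⟩ := h.exists_common hp hR hq hR' hR₀ (hRlow p ν R hp hR)
    (hRlow q μ R' hq hR') (lt_of_lt_of_le (by positivity) hsum)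
    (hpq2.trans (by gcongr))
  exact h.pair_of_common hp hR hq hR' hyK hyν hyμ

/-! ### Local and global constancy -/

/-- Any two touched points at distance at most `δ` carry discs of the same radius and differ by
a multiple of the difference of their normals. -/
def Comparable (K L : Set E) (δ : ℝ) : Prop :=
  ∀ p ν q μ R R', Touch L p ν → IsDisc K p ν R → Touch L q μ →
    IsDisc K q μ R' → dist p q ≤ δ → R = R' ∧ ∃ t : ℝ, p - q = t • (ν - μ)

/-- The normals at touched points near a boundary point are not contained in a proper subspace
`V`: otherwise nearby boundary points would all lie in one translate of a hyperplane containing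
`V`, whereas a touching ball leaves room to move orthogonally to `V`. -/
lemma Config.exists_normal_notMem (h : Config K L M lam) {δ : ℝ} (hδ : Comparable K L δ)
    {V : Submodule ℝ E} (hV : V ≠ ⊤) {p₀ : E} (hp₀ : p₀ ∈ frontier L) {ρ : ℝ} (hρ : 0 < ρ)
    (hρδ : 2 * ρ ≤ δ) : ∃ p ν, Touch L p ν ∧ dist p p₀ < ρ ∧ ν ∉ V := by
  by_contra! hall
  obtain ⟨f, hf, hfV⟩ := exists_unit_orthogonal hV
  obtain ⟨p, ν, hp, hpd⟩ := exists_touch_near h.Lcpt h.Lconv h.Lint hp₀ (half_pos hρ)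
  have hνV := hall p ν hp (by linarith)
  have hflat : ∀ y ∈ frontier L, dist y p₀ < ρ → inner ℝ (y - p) f = 0 := by
    intro y hy hyd
    by_contra hne
    obtain ⟨q, μ, hq, hqd⟩ := exists_touch_near h.Lcpt h.Lconv h.Lint hy
      (lt_min (abs_pos.mpr hne) (sub_pos.mpr hyd))
    have hqy : dist q y < |inner ℝ (y - p) f| := hqd.trans_le (min_le_left _ _)
    have hqp₀ : dist q p₀ < ρ := by
      have h1 := hqd.trans_le (min_le_right _ _)
      have h2 := dist_triangle q y p₀
      linarith
    obtain ⟨R, hR⟩ := h.exists_disc hp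
    obtain ⟨R', hR'⟩ := h.exists_disc hq
    obtain ⟨-, t, ht⟩ := hδ q μ p ν R' R hq hR' hp hR (by
      have := dist_triangle_right q p p₀
      linarith)
    have h0 : inner ℝ (q - p) f = 0 := by
      rw [ht, real_inner_smul_left, inner_sub_left, hfV _ hνV, hfV _ (hall q μ hq hqp₀)]
      simp
    have h1 : inner ℝ (y - p) f = inner ℝ (y - q) f := by
      rw [← sub_add_sub_cancel y q p, inner_add_left, h0, add_zero]
    have h2 := abs_real_inner_le_norm (y - q) f
    rw [hf, mul_one, ← h1, ← dist_eq_norm, dist_comm] at h2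
    linarith
  have hsup := (hp.support h.Lconv h.Lint).1
  obtain ⟨hν, -, r, hr, hball⟩ := hp
  have hνf : inner ℝ ν f = 0 := hfV ν hνV
  have hfν : inner ℝ f ν = 0 := by rw [real_inner_comm]; exact hνf
  have hν0 : ν ≠ 0 := by rintro rfl; simp at hν
  have hopen : ball (p - r • ν) r ⊆ interior L :=
    interior_maximal (ball_subset_closedBall.trans hball) isOpen_ball
  obtain ⟨ε, hε, hεr, hερ⟩ : ∃ ε : ℝ, 0 < ε ∧ ε < r ∧ ε < ρ / 4 :=
    ⟨min r (ρ / 4) / 2, by positivity, by linarith [min_le_left r (ρ / 4)],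
      by linarith [min_le_right r (ρ / 4), lt_min hr (show 0 < ρ / 4 by positivity)]⟩
  have hy₀ : p - r • ν + ε • f ∈ interior L := hopen (by
    rw [mem_ball, dist_eq_norm, add_sub_cancel_left, norm_smul, hf, mul_one,
      Real.norm_of_nonneg hε.le]
    exact hεr)
  obtain ⟨s, hs, hy⟩ := exists_exit h.Lcpt hy₀ hν0
  set y := p - r • ν + ε • f + s • ν with hyd
  have hyp : y - p = ε • f + (s - r) • ν := by rw [hyd]; module
  have hνν : inner ℝ ν ν = 1 := by rw [real_inner_self_eq_norm_sq, hν]; norm_num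
  have hff : inner ℝ f f = 1 := by rw [real_inner_self_eq_norm_sq, hf]; norm_num
  have hsr : s ≤ r := by
    have := hsup y (h.Lcpt.isClosed.frontier_subset hy)
    rw [hyp, inner_add_right, inner_smul_right, inner_smul_right, hνf, hνν] at this
    linarith
  have hrs : r - ε ≤ s := by
    by_contra! hc
    refine hy.2 (hopen ?_)
    have hyc : y - (p - r • ν) = ε • f + s • ν := by rw [hyd]; module
    have hsq : ‖ε • f + s • ν‖ ^ 2 = ε ^ 2 + s ^ 2 := by
      rw [← real_inner_self_eq_norm_sq]
      simp only [inner_add_right, inner_add_left, inner_smul_right, real_inner_smul_left,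
        hνν, hff, hνf, hfν]
      ring
    rw [mem_ball, dist_eq_norm, hyc]
    refine lt_of_pow_lt_pow_left₀ 2 hr.le ?_
    rw [hsq]
    nlinarith
  have hyp' : dist y p ≤ 2 * ε := by
    rw [dist_eq_norm, hyp]
    refine (norm_add_le _ _).trans ?_
    rw [norm_smul, norm_smul, hf, hν, Real.norm_of_nonneg hε.le, Real.norm_eq_abs,
      abs_of_nonpos (by linarith)]
    linarith
  have := hflat y hy (by
    have := dist_triangle y p p₀
    linarith)
  rw [hyp, inner_add_left, real_inner_smul_left, real_inner_smul_left, hff, hνf] at this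
  linarith

/-- All touched points within `ρ` of `x` look like those of the ball with centre `c` and signed
radius `t`, and carry discs of radius `R`. -/
def Loc (K L : Set E) (ρ : ℝ) (c : E) (t R : ℝ) (x : E) : Prop :=
  ∀ p ν, Touch L p ν → dist p x < ρ → p - t • ν = c ∧ IsDisc K p ν R

lemma Config.exists_loc (h : Config K L M lam) {δ : ℝ} (hδ : Comparable K L δ)
    {x : E} (hx : x ∈ frontier L) {ρ : ℝ} (hρ : 0 < ρ) (hρδ : 2 * ρ ≤ δ) :
    ∃ c t R, Loc K L ρ c t R x := by
  have hpair : ∀ p ν q μ, Touch L p ν → dist p x < ρ → Touch L q μ → dist q x < ρ →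
      ∃ t : ℝ, p - q = t • (ν - μ) := by
    intro p ν q μ hp hpx hq hqx
    obtain ⟨R, hR⟩ := h.exists_disc hp
    obtain ⟨R', hR'⟩ := h.exists_disc hq
    exact (hδ p ν q μ R R' hp hR hq hR' (by linarith [dist_triangle_right p q x])).2
  obtain ⟨p₁, ν₁, hp₁, hd₁⟩ := exists_touch_near h.Lcpt h.Lconv h.Lint hx hρ
  obtain ⟨R, hR⟩ := h.exists_disc hp₁
  obtain ⟨p₂, ν₂, hp₂, hd₂, hν₂⟩ :=
    h.exists_normal_notMem hδ (span_pair_ne_top h.dim ν₁ ν₁) hx hρ hρδ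
  have h12 : ν₁ ≠ ν₂ := by
    rintro rfl
    exact hν₂ (Submodule.subset_span (by simp))
  obtain ⟨t, ht⟩ := hpair p₁ ν₁ p₂ ν₂ hp₁ hd₁ hp₂ hd₂
  -- the constant computed from a third point outside the plane of two normals is the same
  have claim : ∀ (q μ : E) (τ : ℝ) (u υ : E) (τ' : ℝ), Touch L q μ → dist q x < ρ →
      ν₁ ≠ μ → p₁ - q = τ • (ν₁ - μ) → Touch L u υ → dist u x < ρ →
      υ ∉ Submodule.span ℝ {ν₁, μ} → u - p₁ = τ' • (υ - ν₁) →
      τ = τ' := by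
    intro q μ τ u υ τ' hq hqx hne hτ hu hux hυ hτ'
    obtain ⟨τ₂, hτ₂⟩ := hpair q μ u υ hq hqx hu hux
    refine triangle_eq (t₂ := τ₂) hne hυ ?_
    rw [← hτ, ← hτ₂, ← hτ']
    abel
  refine ⟨p₁ - t • ν₁, t, R, fun q σ hq hqx => ?_⟩
  obtain ⟨R', hR'⟩ := h.exists_disc hq
  obtain ⟨hRR, τ, hτ⟩ := hδ p₁ ν₁ q σ R R' hp₁ hR hq hR'
    (by linarith [dist_triangle_right p₁ q x])
  refine ⟨?_, hRR ▸ hR'⟩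
  have hfin : τ • (ν₁ - σ) = t • (ν₁ - σ) := by
    by_cases h1 : ν₁ = σ
    · rw [h1, sub_self, smul_zero, smul_zero]
    congr 1
    by_cases hσ : σ ∈ Submodule.span ℝ {ν₁, ν₂}
    · obtain ⟨u, υ, hu, hux, hυ⟩ :=
        h.exists_normal_notMem hδ (span_pair_ne_top h.dim ν₁ ν₂) hx hρ hρδ
      obtain ⟨τ', hτ'⟩ := hpair u υ p₁ ν₁ hu hux hp₁ hd₁
      have hυ' : υ ∉ Submodule.span ℝ {ν₁, σ} := by
        refine fun hmem => hυ (Submodule.span_le.mpr ?_ hmem)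
        rintro z (rfl | rfl)
        · exact Submodule.subset_span (by simp)
        · exact hσ
      rw [claim q σ τ u υ τ' hq hqx h1 hτ hu hux hυ' hτ',
        claim p₂ ν₂ t u υ τ' hp₂ hd₂ h12 ht hu hux hυ hτ']
    · refine (claim p₂ ν₂ t q σ τ hp₂ hd₂ h12 ht hq hqx hσ ?_).symm
      rw [← neg_sub, hτ, ← smul_neg, neg_sub]
  rw [hfin] at hτ
  have : q = p₁ - t • (ν₁ - σ) := by rw [← hτ]; abel
  rw [this]
  module

/-- The local constants propagate to nearby boundary points, because two touched points with
different normals determine them. -/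
lemma Config.loc_of_near (h : Config K L M lam) {δ : ℝ} (hδ : Comparable K L δ)
    {x y c : E} (hy : y ∈ frontier L) {ρ t R : ℝ} (hρ : 0 < ρ) (hρδ : 2 * ρ ≤ δ)
    (hxy : dist y x < ρ / 2) (hx : Loc K L ρ c t R x) : Loc K L ρ c t R y := by
  obtain ⟨c', t', R', hy'⟩ := h.exists_loc hδ hy hρ hρδ
  obtain ⟨p, ν, hp, hpd⟩ := exists_touch_near h.Lcpt h.Lconv h.Lint hy (half_pos hρ)
  obtain ⟨q, μ, hq, hqd, hμ⟩ :=
    h.exists_normal_notMem hδ (span_pair_ne_top h.dim ν ν) hy (half_pos hρ) (by linarith)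
  have hne : ν - μ ≠ 0 := by
    rw [sub_ne_zero]
    rintro rfl
    exact hμ (Submodule.subset_span (by simp))
  obtain ⟨a1, a2⟩ := hx p ν hp (by linarith [dist_triangle p y x])
  obtain ⟨b1, -⟩ := hx q μ hq (by linarith [dist_triangle q y x])
  obtain ⟨c1, c2⟩ := hy' p ν hp (by linarith)
  obtain ⟨d1, -⟩ := hy' q μ hq (by linarith)
  have hRR : R = R' := (hδ p ν p ν R R' hp a2 hp c2 (by rw [dist_self]; linarith)).1
  have htt : t = t' := by
    have e1 : (t - t') • (ν - μ) = 0 := by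
      have : (t - t') • (ν - μ)
          = (p - t' • ν) - (q - t' • μ) - ((p - t • ν) - (q - t • μ)) := by module
      rw [this, a1, b1, c1, d1]; simp
    exact sub_eq_zero.mp ((smul_eq_zero.mp e1).resolve_right hne)
  have hcc : c = c' := by rw [← a1, ← c1, htt]
  rw [hRR, htt, hcc]
  exact hy'

lemma Config.isPreconnected_frontier (h : Config K L M lam) : IsPreconnected (frontier L) := by
  obtain ⟨φ, -, -, hφ⟩ := exists_homeomorph_image_interior_closure_frontier_eq_unitBall
    h.Lconv h.Lint h.Lcpt.isBounded
  rw [← φ.isPreconnected_image, hφ]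
  refine isPreconnected_sphere ?_ 0 1
  rw [← Module.finrank_eq_rank]
  have := h.dim
  exact_mod_cast (show 1 < Module.finrank ℝ E by omega)

/-- The constants are the same for all touched points. -/
lemma Config.exists_global (h : Config K L M lam) :
    ∃ (c : E) (t R : ℝ), ∀ p ν, Touch L p ν → p - t • ν = c ∧ IsDisc K p ν R := by
  obtain ⟨δ, hδ0, hδ⟩ := h.exists_delta
  have hρ : 0 < δ / 2 := half_pos hδ0
  set ρ := δ / 2 with hρd
  have hρδ : 2 * ρ ≤ δ := by linarith
  by_cases hne : (frontier L).Nonempty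
  · obtain ⟨x₀, hx₀⟩ := hne
    obtain ⟨c, t, R, hloc⟩ := h.exists_loc hδ hx₀ hρ hρδ
    refine ⟨c, t, R, fun p ν hp => ?_⟩
    have hnear : ∀ z : E, ∀ y ∈ frontier L, dist y z < ρ / 4 →
        z ∈ ⋃ x ∈ {x | Loc K L ρ c t R x}, ball x (ρ / 4) → Loc K L ρ c t R y := by
      intro z y hy hyz hz
      simp only [mem_iUnion, mem_ball] at hz
      obtain ⟨x, hx, hzx⟩ := hz
      exact h.loc_of_near hδ hy hρ hρδ (by linarith [dist_triangle y z x]) hx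
    have hmem : ∀ x, Loc K L ρ c t R x → x ∈ ⋃ x ∈ {x | Loc K L ρ c t R x}, ball x (ρ / 4) :=
      fun x hx => mem_iUnion₂.mpr ⟨x, hx, mem_ball_self (by positivity)⟩
    have hsub := h.isPreconnected_frontier.subset_of_closure_inter_subset
      (u := ⋃ x ∈ {x | Loc K L ρ c t R x}, ball x (ρ / 4))
      (isOpen_biUnion fun x _ => isOpen_ball) ⟨x₀, hx₀, hmem x₀ hloc⟩ (by
        rintro y ⟨hyc, hy⟩
        obtain ⟨z, hz, hyz⟩ := Metric.mem_closure_iff.mp hyc (ρ / 4) (by positivity)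
        exact hmem y (hnear z y hy hyz hz))
    exact hnear p p hp.2.1 (by rw [dist_self]; positivity) (hsub hp.2.1) p ν hp
      (by rw [dist_self]; exact hρ)
  · exact ⟨0, 0, 0, fun p ν hp => absurd ⟨p, hp.2.1⟩ hne⟩

/-! ### Conclusion -/

/-- The theorem in an arbitrary finite-dimensional Euclidean space. -/
theorem Config.concentric (h : Config K L M lam) :
    ∃ (c : E) (r s : ℝ), K = closedBall c r ∧ L = closedBall c s := by
  have hd := h.dim
  have : Nontrivial E := Module.nontrivial_of_finrank_pos (R := ℝ) (by omega)
  obtain ⟨c, t, R, hall⟩ := h.exists_global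
  have hLfr : ∀ x ∈ frontier L, dist x c = |t| := by
    have htouch : ∀ p ν, Touch L p ν → dist p c = |t| := by
      intro p ν hp
      rw [← (hall p ν hp).1, dist_eq_norm, sub_sub_cancel, norm_smul, hp.1, mul_one,
        Real.norm_eq_abs]
    intro x hx
    have hx' : x ∈ closure {y | dist y c = |t|} := by
      rw [Metric.mem_closure_iff]
      intro ε hε
      obtain ⟨p, ν, hp, hpd⟩ := exists_touch_near h.Lcpt h.Lconv h.Lint hx hε
      exact ⟨p, htouch p ν hp, by rwa [dist_comm]⟩
    have hcl : IsClosed {y : E | dist y c = |t|} := isClosed_eq (by fun_prop) (by fun_prop)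
    rw [hcl.closure_eq] at hx'
    exact hx'
  have hL := eq_closedBall_of_frontier_subset h.Lcpt h.Lint hLfr
  set s := |t| with hs
  have hs0 : s ≠ 0 := by
    intro h0
    have hi := h.Lint
    rw [hL, h0, closedBall_zero, interior_singleton] at hi
    exact not_nonempty_empty hi
  have hspos : 0 < s := lt_of_le_of_ne (abs_nonneg t) hs0.symm
  refine ⟨c, √(R ^ 2 + s ^ 2), s,
    eq_closedBall_of_frontier_subset h.Kcpt h.Kint fun x hx => ?_, hL⟩
  have hD : s < ‖x - c‖ := by
    by_contra! hc
    refine hx.2 (h.LK ?_)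
    rw [hL, mem_closedBall, dist_eq_norm]
    exact hc
  have hDpos : 0 < ‖x - c‖ := hspos.trans hD
  obtain ⟨v, hv, hxv, -⟩ := exists_unit_orthogonal_pair h.dim (x - c) (x - c)
  have hvx : inner ℝ v (x - c) = 0 := by rw [real_inner_comm]; exact hxv
  have hvv : inner ℝ v v = 1 := by rw [real_inner_self_eq_norm_sq, hv]; norm_num
  -- the normal of a hyperplane through `x` tangent to the ball `L`
  set ν := (s / ‖x - c‖ ^ 2) • (x - c) + √(1 - (s / ‖x - c‖) ^ 2) • v with hνd
  have hκ : √(1 - (s / ‖x - c‖) ^ 2) ^ 2 = 1 - (s / ‖x - c‖) ^ 2 := by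
    apply Real.sq_sqrt
    have h1 : s / ‖x - c‖ < 1 := (div_lt_one hDpos).mpr hD
    have h2 : 0 < s / ‖x - c‖ := by positivity
    nlinarith
  have hνx : inner ℝ ν (x - c) = s := by
    rw [hνd, inner_add_left, real_inner_smul_left, real_inner_smul_left, hvx,
      real_inner_self_eq_norm_sq]
    field_simp
    ring
  have hν : ‖ν‖ = 1 := by
    rw [← sq_eq_sq₀ (norm_nonneg _) zero_le_one, ← real_inner_self_eq_norm_sq, hνd]
    simp only [inner_add_right, inner_add_left, inner_smul_right, real_inner_smul_left,
      hvx, hxv, hvv, real_inner_self_eq_norm_sq (x - c)]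
    rw [mul_zero, mul_zero, add_zero, zero_add, mul_one, ← sq √(1 - (s / ‖x - c‖) ^ 2), hκ]
    field_simp
    ring
  have hp : Touch L (c + s • ν) ν := by
    refine ⟨hν, ?_, s, hspos, ?_⟩
    · rw [hL, frontier_closedBall c hs0, mem_sphere, dist_eq_norm, add_sub_cancel_left, norm_smul,
        hν, mul_one, Real.norm_of_nonneg hspos.le]
    · rw [add_sub_cancel_right, hL]
  have hxp : inner ℝ ν (x - (c + s • ν)) = 0 := by
    rw [← sub_sub, inner_sub_right, hνx, inner_smul_right, real_inner_self_eq_norm_sq, hν]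
    ring
  have hdist := h.dist_eq_of_frontier hp (hall _ _ hp).2 hx hxp
  rw [dist_eq_norm] at hdist ⊢
  rw [eq_comm, Real.sqrt_eq_iff_mul_self_eq (by positivity) (norm_nonneg _)]
  have e : x - c = (x - (c + s • ν)) + s • ν := by abel
  have hsq : ‖x - c‖ ^ 2 = R ^ 2 + s ^ 2 := by
    rw [e, norm_add_sq_real, hdist, inner_smul_right, real_inner_comm, hxp, norm_smul, hν,
      Real.norm_of_nonneg hspos.le]
    ring
  rw [← hsq]
  ring

end General

/-- If for every boundary point `x` of `M` all lines through `x` supporting `L` cut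
chords of the same length `lam x` on `K`, then `K` and `L` are concentric balls. -/
theorem stmt_3 {n : ℕ} (hn : 3 ≤ n) (K L M : Set (EuclideanSpace ℝ (Fin n)))
    (hKcpt : IsCompact K) (hKconv : Convex ℝ K) (hKint : (interior K).Nonempty)
    (hLcpt : IsCompact L) (hLconv : Convex ℝ L) (hLint : (interior L).Nonempty)
    (hMcpt : IsCompact M) (hMconv : Convex ℝ M) (hMint : (interior M).Nonempty)
    (hLK : L ⊆ interior K) (hKM : K ⊆ interior M)
    (lam : EuclideanSpace ℝ (Fin n) → ℝ)
    (hchord : ∀ x ∈ frontier M, ∀ u : EuclideanSpace ℝ (Fin n), ‖u‖ = 1 →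
      LineSupports L x u → Metric.diam (K ∩ lineThrough x u) = lam x) :
    ∃ (c : EuclideanSpace ℝ (Fin n)) (r s : ℝ),
      K = Metric.closedBall c r ∧ L = Metric.closedBall c s := by
  have hcfg : Config K L M lam :=
    { dim := by rw [finrank_euclideanSpace_fin]; exact hn
      Kcpt := hKcpt
      Kconv := hKconv
      Lcpt := hLcpt
      Lconv := hLconv
      Lint := hLint
      Mcpt := hMcpt
      LK := hLK
      KM := hKM
      chord := by
        rintro x hx u hu ⟨s, hs⟩ hn'
        refine hchord x hx u hu ⟨⟨_, ⟨s, rfl⟩, hs⟩, ?_⟩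
        rw [eq_empty_iff_forall_notMem]
        rintro _ ⟨⟨s', rfl⟩, hy⟩
        exact hn' s' hy }
  exact hcfg.concentric
end
end

section
/- Let K, L, M be convex bodies in ℝⁿ with n ≥ 3, L ⊂ int K and K ⊂ int M. Suppose that for every point x ∈ ∂M there is a number λ(x) such that every line through x supporting L intersects K in a chord of length λ(x). Then any two parallel chords of K whose lines support L have the same length. -/
/-!
The function `lam` is in fact constant on `frontier M`; since every line supporting `L` meets
`frontier M`, all chords cut by supporting lines have the same length.

If `x, z ∈ frontier M` and the line `xz` supports `L`, then `lam x = lam z` (`chord_eq`). Write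
`S y` for the set of all `z ∈ frontier M` such that the line `yz` supports `L`. The key fact
(`exists_common_tangent`) is that `S x` and `S y` meet whenever `x, y ∈ frontier M` are close, which
makes `lam` locally constant; `frontier M` is connected, so `lam` is constant.

For the key fact, project `L` centrally from `y` to a hyperplane parallel to the line `xy`. The
image `B` is a convex body of dimension at least 2 (this is where `3 ≤ n` enters), so its
frontier is connected, and so is its image in `S y`, obtained by sending each tangent direction to
the second point of `frontier M` on the tangent line. In the plane through `x`, `y` and an
interior point `o` of `L` there are two extreme tangent lines from `y`: the end point of the one
turned furthest towards the side of `x` is not in the open cone spanned by `interior L` at `x`,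
while the end point of the other one is in the cone spanned by `L` at `x`. By connectedness some
point of `S y` is on the boundary of the cone at `x`, that is, in `S x`.
-/

open Metric Set
open scoped RealInnerProductSpace

noncomputable section

/-! ### Convex bodies and rays -/

variable {E : Type*} [NormedAddCommGroup E] [NormedSpace ℝ E]

theorem isConnected_frontier_of_convex {s : Set E} (hs : Convex ℝ s)
    (hb : Bornology.IsBounded s) (hi : (interior s).Nonempty) (hr : 1 < Module.rank ℝ E) :
    IsConnected (frontier s) := by
  obtain ⟨h, -, -, hf⟩ := exists_homeomorph_image_interior_closure_frontier_eq_unitBall hs hi hb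
  have : frontier s = h.symm '' sphere 0 1 := by
    rw [← hf, ← Set.image_comp]; simp
  rw [this]
  exact (isConnected_sphere hr 0 zero_le_one).image _ h.symm.continuous.continuousOn

theorem exists_frontier_on_ray {M : Set E} (hM : IsCompact M) {m v : E}
    (hm : m ∈ interior M) (hv : v ≠ 0) : ∃ t : ℝ, 0 ≤ t ∧ m + t • v ∈ frontier M := by
  obtain ⟨R, hR⟩ := hM.isBounded.subset_closedBall m
  have hv' : 0 < ‖v‖ := norm_pos_iff.2 hv
  have hpre : IsPreconnected ((fun t : ℝ => m + t • v) '' Ici 0) :=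
    isPreconnected_Ici.image _ (by fun_prop)
  by_contra! hno
  obtain ⟨z, -, hz1, hz2⟩ := hpre (interior M) Mᶜ isOpen_interior hM.isClosed.isOpen_compl
    (by
      rintro _ ⟨t, ht, rfl⟩
      by_contra hc
      rw [mem_union, not_or, notMem_compl_iff] at hc
      exact hno t ht ⟨subset_closure hc.2, hc.1⟩)
    ⟨m, ⟨0, by simp, by simp⟩, hm⟩
    ⟨_, ⟨(|R| + 1) / ‖v‖, by rw [mem_Ici]; positivity, rfl⟩, fun hc => by
      have := hR hc
      rw [mem_closedBall, dist_eq_norm, add_sub_cancel_left, norm_smul, Real.norm_eq_abs,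
        abs_of_nonneg (by positivity), div_mul_cancel₀ _ hv'.ne'] at this
      linarith [le_abs_self R]⟩
  exact hz2 (interior_subset hz1)

theorem ray_mem_interior {M : Set E} (hM : Convex ℝ M) {y v : E} (hy : y ∈ M) {s t : ℝ}
    (hs : 0 < s) (hst : s ≤ t) (ht : y + t • v ∈ interior M) : y + s • v ∈ interior M := by
  rcases hst.eq_or_lt with rfl | hst
  · exact ht
  have h0 : 0 < t := hs.trans hst
  refine hM.openSegment_self_interior_subset_interior hy ht
    ⟨1 - s / t, s / t, by rw [sub_pos, div_lt_one h0]; exact hst, by positivity, by ring, ?_⟩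
  rw [smul_add, smul_smul, div_mul_cancel₀ _ h0.ne']
  module

theorem ray_mem {M : Set E} (hM : Convex ℝ M) {y v : E} (hy : y ∈ M) {s t : ℝ}
    (hs : 0 < s) (hst : s ≤ t) (ht : y + t • v ∈ M) : y + s • v ∈ M := by
  have h0 : 0 < t := hs.trans_le hst
  have := hM hy ht (a := 1 - s / t) (b := s / t) (by rw [sub_nonneg, div_le_one h0]; exact hst)
    (by positivity) (by ring)
  rw [smul_add, smul_smul, div_mul_cancel₀ _ h0.ne'] at this
  convert this using 1
  module

/-- Between two frontier points of a convex body, a line can meet the interior only strictly inside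
the segment joining them. -/
theorem param_mem_Ioo {M : Set E} (hM : Convex ℝ M) (hMc : IsClosed M) {x z : E}
    (hx : x ∈ frontier M) (hz : z ∈ frontier M) {t : ℝ}
    (ht : x + t • (z - x) ∈ interior M) : t ∈ Ioo (0 : ℝ) 1 := by
  have hxM := hMc.frontier_subset hx
  have hzM := hMc.frontier_subset hz
  constructor
  · by_contra! h
    have h1 := ray_mem_interior hM hzM (v := x - z) (s := 1) (t := 1 - t) one_pos (by linarith)
      (by convert ht using 1; module)
    exact hx.2 (by simpa using h1)
  · by_contra! h
    have h1 := ray_mem_interior hM hxM (v := z - x) (s := 1) one_pos h ht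
    exact hz.2 (by simpa using h1)

/-- For a family of rays from a frontier point `y` that pass through the interior of `M`, the
parameter `τ` at which the ray leaves `M` depends continuously on the direction. -/
theorem continuousOn_second_hit {X : Type*} [TopologicalSpace X] {M : Set E}
    (hM : Convex ℝ M) (hMc : IsClosed M) {y : E} (hy : y ∈ frontier M) {S : Set X} {v : X → E}
    (hv : Continuous v) {τ : X → ℝ} (hτ : ∀ w ∈ S, y + τ w • v w ∈ frontier M)
    (hint : ∀ w ∈ S, ∃ s : ℝ, 0 < s ∧ s < τ w ∧ y + s • v w ∈ interior M) :
    ContinuousOn τ S := by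
  have hyM := hMc.frontier_subset hy
  have hτpos : ∀ w ∈ S, 0 < τ w := fun w hw => by
    obtain ⟨s, h0, h1, -⟩ := hint w hw
    exact h0.trans h1
  -- Each ray is in the interior before time `τ` and outside `M` after it.
  have hin : ∀ w ∈ S, ∀ t, 0 < t → t < τ w → y + t • v w ∈ interior M := by
    intro w hw t ht0 ht
    obtain ⟨s, hs0, hs, hsM⟩ := hint w hw
    rcases le_total t s with h | h
    · exact ray_mem_interior hM hyM ht0 h hsM
    · have hzM := hMc.frontier_subset (hτ w hw)
      have := ray_mem_interior hM hzM (v := -v w) (s := τ w - t) (t := τ w - s)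
        (by linarith) (by linarith) (by convert hsM using 1; module)
      convert this using 1
      module
  have hout : ∀ w ∈ S, ∀ t, τ w < t → y + t • v w ∉ M := by
    intro w hw t ht htM
    obtain ⟨s, hs0, hs, hsM⟩ := hint w hw
    have := ray_mem_interior hM htM (v := -v w) (s := t - τ w) (t := t - s)
        (by linarith) (by linarith) (by convert hsM using 1; module)
    refine (hτ w hw).2 ?_
    convert this using 1
    module
  intro w₀ hw₀
  have hcont : ∀ t : ℝ, Filter.Tendsto (fun w => y + t • v w) (nhdsWithin w₀ S)
      (nhds (y + t • v w₀)) := fun t =>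
    ((by fun_prop : Continuous fun w => y + t • v w).tendsto w₀).mono_left nhdsWithin_le_nhds
  refine tendsto_order.2 ⟨fun a ha => ?_, fun a ha => ?_⟩
  · obtain ⟨t, hat, htτ⟩ := exists_between (max_lt ha (hτpos w₀ hw₀))
    have hmem := hin w₀ hw₀ t ((le_max_right _ _).trans_lt hat) htτ
    filter_upwards [(hcont t).eventually_mem (isOpen_interior.mem_nhds hmem),
      self_mem_nhdsWithin] with w hw hwS
    refine ((le_max_left _ _).trans_lt hat).trans ?_
    by_contra! h
    exact (hτ w hwS).2 (ray_mem_interior hM hyM (hτpos w hwS) h hw)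
  · obtain ⟨t, hτt, hta⟩ := exists_between ha
    have hmem := hout w₀ hw₀ t hτt
    filter_upwards [(hcont t).eventually_mem (hMc.isOpen_compl.mem_nhds hmem),
      self_mem_nhdsWithin] with w hw hwS
    refine lt_trans ?_ hta
    by_contra! h
    exact hw (ray_mem hM hyM ((hτpos w₀ hw₀).trans hτt) h (hMc.frontier_subset (hτ w hwS)))

/-- The points `z` for which the segment from `x` to `z` meets `L` form a closed set. -/
theorem isClosed_shadow {L : Set E} (hL : IsClosed L) (x : E) :
    IsClosed {z : E | ∃ t ∈ Icc (0 : ℝ) 1, x + t • (z - x) ∈ L} := by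
  have hc : IsClosed {p : Icc (0 : ℝ) 1 × E | x + (p.1 : ℝ) • (p.2 - x) ∈ L} :=
    hL.preimage (by fun_prop)
  convert isClosedMap_snd_of_compactSpace _ hc using 1
  ext z
  simp

theorem isOpen_lines_meeting {U : Set E} (hU : IsOpen U) (x : E) :
    IsOpen {z : E | ∃ t : ℝ, x + t • (z - x) ∈ U} := by
  simp only [ofPred_exists]
  exact isOpen_iUnion fun t => hU.preimage (by fun_prop)

/-! ### Common tangents from two nearby points -/

/-- Two frontier points `x`, `y` of `M` that are close (`o + (y - x)` still lies in `L`) and whose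
line is strictly separated from `L` (by a functional `f` constant on that line) are both joined to
some `z ∈ frontier M` by lines that meet `L` but not its interior. -/
theorem exists_common_tangent [FiniteDimensional ℝ E] (hdim : 3 ≤ Module.finrank ℝ E)
    {L M : Set E} (hL : IsCompact L) (hLc : Convex ℝ L) (hM : IsCompact M) (hMc : Convex ℝ M)
    (hLM : L ⊆ interior M) {x y o : E} (hx : x ∈ frontier M) (hy : y ∈ frontier M)
    (hxy : x ≠ y) (ho : o ∈ interior L) (hod : o + (y - x) ∈ L)
    (f : E →L[ℝ] ℝ) (hf : ∀ l ∈ L, f l < f y) (hfxy : f x = f y) :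
    ∃ z ∈ frontier M,
      ((∃ t : ℝ, x + t • (z - x) ∈ L) ∧ ∀ t : ℝ, x + t • (z - x) ∉ interior L) ∧
      ((∃ t : ℝ, y + t • (z - y) ∈ L) ∧ ∀ t : ℝ, y + t • (z - y) ∉ interior L) := by
  have hMcl := hM.isClosed
  have hyM := hMcl.frontier_subset hy
  have hLsub : interior L ⊆ L := interior_subset
  set W := LinearMap.ker (f : E →ₗ[ℝ] ℝ) with hW
  have hfW : ∀ w : W, f (w : E) = 0 := fun w => w.2
  have hfo : f (o - y) < 0 := by rw [map_sub]; linarith [hf o (hLsub ho)]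
  have hrank : 1 < Module.rank ℝ W := by
    apply Module.one_lt_rank_of_one_lt_finrank
    have hne : (f : E →ₗ[ℝ] ℝ) ≠ 0 := by
      intro h
      have : f (o - y) = 0 := LinearMap.congr_fun h (o - y)
      linarith
    have := Module.Dual.finrank_ker_add_one_of_ne_zero hne
    rw [hW]
    omega
  -- The central projection of `L` from `y` to the hyperplane through `o` parallel to `W`.
  set B : Set W := {w | ∃ s : ℝ, y + s • (o - y + (w : E)) ∈ L} with hB
  have hspos : ∀ (w : W) (s : ℝ), y + s • (o - y + (w : E)) ∈ L → 0 < s := by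
    intro w s h
    have h1 := hf _ h
    rw [map_add, map_smul, map_add, hfW, smul_eq_mul] at h1
    nlinarith
  have hBcpt : IsCompact B := by
    rw [Topology.IsEmbedding.subtypeVal.isCompact_iff]
    have himg : (Subtype.val '' B : Set E) =
        (fun l => (f (o - y) / f (l - y)) • (l - y) - (o - y)) '' L := by
      ext v
      constructor
      · rintro ⟨w, ⟨s, hs⟩, rfl⟩
        refine ⟨_, hs, ?_⟩
        have h0 := hspos w s hs
        have : f (o - y) / f (y + s • (o - y + (w : E)) - y) = s⁻¹ := by
          rw [add_sub_cancel_left, map_smul, map_add, hfW, smul_eq_mul, add_zero]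
          rw [div_mul_cancel_right₀ hfo.ne]
        beta_reduce
        rw [this, add_sub_cancel_left, smul_smul, inv_mul_cancel₀ h0.ne', one_smul,
          add_sub_cancel_left]
      · rintro ⟨l, hl, rfl⟩
        have hl0 : f (l - y) < 0 := by rw [map_sub]; linarith [hf l hl]
        refine ⟨⟨(f (o - y) / f (l - y)) • (l - y) - (o - y), ?_⟩, ⟨f (l - y) / f (o - y), ?_⟩,
          rfl⟩
        · change f _ = 0
          rw [map_sub, map_smul, smul_eq_mul, div_mul_cancel₀ _ hl0.ne, sub_self]
        · have : f (l - y) / f (o - y) * (f (o - y) / f (l - y)) = 1 := by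
            rw [div_mul_div_cancel₀ hfo.ne, div_self hl0.ne]
          simp only [add_sub_cancel, smul_smul, this, one_smul]
          exact hl
    rw [himg]
    refine hL.image_of_continuousOn ?_
    refine ContinuousOn.sub (ContinuousOn.smul (ContinuousOn.div (by fun_prop) (by fun_prop) ?_)
      (by fun_prop)) (by fun_prop)
    intro l hl
    have : f (l - y) < 0 := by rw [map_sub]; linarith [hf l hl]
    exact this.ne
  -- The parameter `s` of a convex combination is the weighted harmonic mean of `s₁` and `s₂`.
  have hBconv : Convex ℝ B := by
    rintro w₁ ⟨s₁, h₁⟩ w₂ ⟨s₂, h₂⟩ α β hα hβ hαβ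
    have p₁ := hspos _ _ h₁
    have p₂ := hspos _ _ h₂
    have hD : 0 < α * s₂ + β * s₁ := by
      rcases hα.eq_or_lt with rfl | hα
      · have : β = 1 := by linarith
        subst this; linarith
      · have := mul_nonneg hβ p₁.le
        have := mul_pos hα p₂
        linarith
    refine ⟨s₁ * s₂ / (α * s₂ + β * s₁), ?_⟩
    have := hLc h₁ h₂ (a := α * s₂ / (α * s₂ + β * s₁)) (b := β * s₁ / (α * s₂ + β * s₁))
      (by positivity) (by positivity) (by field_simp)
    convert this using 1
    push_cast
    have hβ' : β = 1 - α := by linarith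
    have hD' := hD.ne'
    subst hβ'
    generalize hDd : α * s₂ + (1 - α) * s₁ = D at hD' ⊢
    match_scalars <;> field_simp <;> first | ring1 | (rw [← hDd]; ring1)
  -- Directions whose line meets `interior L` form an open subset of `B`.
  have hBint : ∀ (w : W) (s : ℝ), y + s • (o - y + (w : E)) ∈ interior L → w ∈ interior B := by
    intro w s hs
    refine mem_interior.2 ⟨{w' : W | y + s • (o - y + (w' : E)) ∈ interior L},
      fun w' hw' => ⟨s, hLsub hw'⟩, isOpen_interior.preimage (by fun_prop), hs⟩
  have hBne : (interior B).Nonempty := ⟨0, hBint 0 1 (by simpa using ho)⟩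
  have hconn := isConnected_frontier_of_convex hBconv hBcpt.isBounded hBne hrank
  have hBfr : frontier B ⊆ B := hBcpt.isClosed.frontier_subset
  -- The second point of `frontier M` on the line from `y` in direction `o - y + w`.
  have hτex : ∀ w : W, w ∈ B → ∃ t s : ℝ, 0 < s ∧ s < t ∧ y + s • (o - y + (w : E)) ∈ L ∧
      y + t • (o - y + (w : E)) ∈ frontier M := by
    rintro w ⟨s, hs⟩
    have hv : o - y + (w : E) ≠ 0 := by
      intro h
      have := congrArg f h
      rw [map_add, hfW, map_zero] at this
      linarith
    obtain ⟨t, ht, hfr⟩ := exists_frontier_on_ray hM (hLM hs) hv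
    have ht0 : t ≠ 0 := by
      rintro rfl
      exact hfr.2 (by simpa using hLM hs)
    refine ⟨s + t, s, hspos w s hs, by linarith [lt_of_le_of_ne ht ht0.symm], hs, ?_⟩
    convert hfr using 1
    module
  choose! τ σ hσ0 hστ hσL hτfr using hτex
  have hτpos : ∀ w ∈ B, 0 < τ w := fun w hw => (hσ0 w hw).trans (hστ w hw)
  set Z : W → E := fun w => y + τ w • (o - y + (w : E)) with hZ
  have hZcont : ContinuousOn Z B := by
    have h3 : ContinuousOn τ B :=
      continuousOn_second_hit hMc hMcl hy (v := fun w : W => o - y + (w : E)) (by fun_prop) hτfr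
        fun w hw => ⟨σ w, hσ0 w hw, hστ w hw, hLM (hσL w hw)⟩
    exact continuousOn_const.add (h3.smul (by fun_prop))
  -- All points `Z w` with `w ∈ frontier B` are on tangent lines from `y`.
  have hZtan : ∀ w ∈ frontier B, (∃ t : ℝ, y + t • (Z w - y) ∈ L) ∧
      ∀ t : ℝ, y + t • (Z w - y) ∉ interior L := by
    intro w hw
    have h0 := hτpos w (hBfr hw)
    constructor
    · refine ⟨σ w / τ w, ?_⟩
      simp only [hZ, add_sub_cancel_left, smul_smul, div_mul_cancel₀ _ h0.ne']
      exact hσL w (hBfr hw)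
    · intro t ht
      simp only [hZ, add_sub_cancel_left, smul_smul] at ht
      exact hw.2 (hBint w _ ht)
  have hpre : IsPreconnected (Z '' frontier B) :=
    hconn.isPreconnected.image Z (hZcont.mono hBfr)
  -- The two extreme tangent lines from `y` in the plane through `x`, `y`, `o`.
  set d : W := ⟨y - x, by change f _ = 0; rw [map_sub]; linarith⟩ with hd
  have hdE : (d : E) = y - x := rfl
  have hd0 : d ≠ 0 := by
    intro h
    have : (d : E) = 0 := by rw [h]; rfl
    exact hxy (sub_eq_zero.1 (hdE ▸ this)).symm
  have hIcpt : IsCompact {β : ℝ | β • d ∈ B} :=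
    (isClosedEmbedding_smul_left (𝕜 := ℝ) hd0).isCompact_preimage hBcpt
  have h1mem : (1 : ℝ) ∈ {β : ℝ | β • d ∈ B} := by
    refine ⟨1, ?_⟩
    convert hod using 1
    simp only [one_smul, hdE]
    module
  obtain ⟨β₁, hβ₁, hβ₁min⟩ := hIcpt.exists_isLeast ⟨1, h1mem⟩
  obtain ⟨β₂, hβ₂, hβ₂max⟩ := hIcpt.exists_isGreatest ⟨1, h1mem⟩
  have hlin : Continuous fun β : ℝ => β • d := by fun_prop
  have hfr₁ : β₁ • d ∈ frontier B := by
    refine ⟨subset_closure hβ₁, fun hi => ?_⟩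
    have hnh : ∀ᶠ β in nhds β₁, β • d ∈ interior B :=
      hlin.continuousAt.eventually_mem (isOpen_interior.mem_nhds hi)
    obtain ⟨β, hβ, hlt⟩ := ((hnh.filter_mono nhdsWithin_le_nhds).and
      (self_mem_nhdsWithin (s := Iio β₁))).exists
    exact absurd (hβ₁min (show β • d ∈ B from interior_subset hβ)) (not_le.2 hlt)
  have hfr₂ : β₂ • d ∈ frontier B := by
    refine ⟨subset_closure hβ₂, fun hi => ?_⟩
    have hnh : ∀ᶠ β in nhds β₂, β • d ∈ interior B :=
      hlin.continuousAt.eventually_mem (isOpen_interior.mem_nhds hi)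
    obtain ⟨β, hβ, hlt⟩ := ((hnh.filter_mono nhdsWithin_le_nhds).and
      (self_mem_nhdsWithin (s := Ioi β₂))).exists
    exact absurd (hβ₂max (show β • d ∈ B from interior_subset hβ)) (not_le.2 hlt)
  have hβ₂1 : 1 ≤ β₂ := hβ₂max h1mem
  -- With `p ∈ L` the point on the tangent line, `Z - x` is a nonnegative combination of `o - x` and
  -- `p - x`; this uses `1 ≤ β₂`.
  have hZ₂ : ∃ t ∈ Icc (0 : ℝ) 1, x + t • (Z (β₂ • d) - x) ∈ L := by
    have hs := hσ0 _ hβ₂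
    have hsT := hστ _ hβ₂
    have hp := hσL _ hβ₂
    set T := τ (β₂ • d) with hT
    set s := σ (β₂ • d)
    have hD : 0 < s * (β₂ - 1) + 1 := by nlinarith
    have hE : s * (β₂ - 1) ≤ T * (β₂ - 1) := mul_le_mul_of_nonneg_right hsT.le (by linarith)
    have hN : 0 < T - s + (T * (β₂ - 1) + 1) := by linarith
    refine ⟨(s * (β₂ - 1) + 1) / (T - s + (T * (β₂ - 1) + 1)),
      ⟨by positivity, (div_le_one hN).2 (by linarith)⟩, ?_⟩
    have := hLc (hLsub ho) hp (a := (T - s) / (T - s + (T * (β₂ - 1) + 1)))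
      (b := (T * (β₂ - 1) + 1) / (T - s + (T * (β₂ - 1) + 1)))
      (div_nonneg (by linarith) hN.le) (div_nonneg (by linarith) hN.le)
      (by rw [← add_div, div_self hN.ne'])
    convert this using 1
    simp only [hZ, ← hT, Submodule.coe_smul, hdE]
    have hN' := hN.ne'
    generalize hNd : T - s + (T * (β₂ - 1) + 1) = N at hN' ⊢
    match_scalars <;> field_simp <;> first | ring1 | (rw [← hNd]; ring1)
  -- A point of `interior L` on the line from `x` to `Z` would be projected from `y` to a multiple of
  -- `d` with coefficient smaller than `β₁`.
  have hZ₁ : ∀ t : ℝ, x + t • (Z (β₁ • d) - x) ∉ interior L := by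
    intro t ht
    obtain ⟨ht0, ht1⟩ := param_mem_Ioo hMc hMcl hx (hτfr _ hβ₁) (hLM (hLsub ht))
    have hp := hτpos _ hβ₁
    set T := τ (β₁ • d) with hT
    have hmem : (β₁ - (1 - t) / (t * T)) ∈ {β : ℝ | β • d ∈ B} := by
      refine ⟨t * T, ?_⟩
      convert hLsub ht using 1
      simp only [hZ, ← hT, Submodule.coe_smul, hdE]
      match_scalars <;> field_simp <;> ring
    have := hβ₁min hmem
    have : 0 < (1 - t) / (t * T) := div_pos (by linarith) (by positivity)
    linarith
  -- Otherwise the connected set `Z '' frontier B` would split into the part in the open cone over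
  -- `interior L` at `x` and the part outside the cone over `L`.
  by_contra! hno
  have hno' : ∀ w ∈ frontier B, (∃ t : ℝ, x + t • (Z w - x) ∈ L) →
      ∃ t : ℝ, x + t • (Z w - x) ∈ interior L := by
    intro w hw h
    by_contra! h'
    obtain ⟨t, ht⟩ := hno (Z w) (hτfr w (hBfr hw)) ⟨h, h'⟩ (hZtan w hw).1
    exact (hZtan w hw).2 t ht
  have hIoo : ∀ w ∈ frontier B, ∀ t : ℝ, x + t • (Z w - x) ∈ interior L → t ∈ Icc (0 : ℝ) 1 :=
    fun w hw t ht => Ioo_subset_Icc_self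
      (param_mem_Ioo hMc hMcl hx (hτfr _ (hBfr hw)) (hLM (hLsub ht)))
  obtain ⟨_, ⟨w, hw, rfl⟩, ⟨t, ht⟩, hw2⟩ := hpre _ _ (isOpen_lines_meeting isOpen_interior x)
    (isClosed_shadow hL.isClosed x).isOpen_compl (by
      rintro _ ⟨w, hw, rfl⟩
      by_cases h : ∃ t ∈ Icc (0 : ℝ) 1, x + t • (Z w - x) ∈ L
      · obtain ⟨t, -, ht⟩ := h
        exact Or.inl (hno' w hw ⟨t, ht⟩)
      · exact Or.inr h)
    ⟨_, ⟨_, hfr₂, rfl⟩, by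
      obtain ⟨t, -, ht⟩ := hZ₂
      exact hno' _ hfr₂ ⟨t, ht⟩⟩
    ⟨_, ⟨_, hfr₁, rfl⟩, by
      rintro ⟨t, -, ht⟩
      obtain ⟨t, ht⟩ := hno' _ hfr₁ ⟨t, ht⟩
      exact hZ₁ t ht⟩
  exact hw2 ⟨t, hIoo w hw t ht, hLsub ht⟩

/-! ### Chord lengths -/

theorem lineThrough_eq {n : ℕ} {a u x : EuclideanSpace ℝ (Fin n)} {t : ℝ} (hx : x = a + t • u) :
    lineThrough x u = lineThrough a u := by
  subst hx
  ext z
  constructor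
  · rintro ⟨s, rfl⟩
    exact ⟨t + s, by module⟩
  · rintro ⟨s, rfl⟩
    exact ⟨s - t, by module⟩

/-- If the line through `x, z ∈ frontier M` supports `L`, then it is among the lines considered at
both points. -/
theorem chord_eq {n : ℕ} {K L M : Set (EuclideanSpace ℝ (Fin n))}
    {lam : EuclideanSpace ℝ (Fin n) → ℝ} (hLM : L ⊆ interior M)
    (hchord : ∀ x ∈ frontier M, ∀ u : EuclideanSpace ℝ (Fin n), ‖u‖ = 1 →
      LineSupports L x u → Metric.diam (K ∩ lineThrough x u) = lam x)
    {x z : EuclideanSpace ℝ (Fin n)} (hx : x ∈ frontier M) (hz : z ∈ frontier M)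
    (hL : ∃ t : ℝ, x + t • (z - x) ∈ L) (hi : ∀ t : ℝ, x + t • (z - x) ∉ interior L) :
    lam x = lam z := by
  have hne : z - x ≠ 0 := by
    intro h
    obtain ⟨t, ht⟩ := hL
    rw [h, smul_zero, add_zero] at ht
    exact hx.2 (hLM ht)
  have hn : ‖z - x‖ ≠ 0 := norm_ne_zero_iff.2 hne
  set u := ‖z - x‖⁻¹ • (z - x) with hu
  have hu1 : ‖u‖ = 1 := by rw [hu, norm_smul, norm_inv, norm_norm, inv_mul_cancel₀ hn]
  have hzx : z - x = ‖z - x‖ • u := by rw [hu, smul_smul, mul_inv_cancel₀ hn, one_smul]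
  have hline : lineThrough z u = lineThrough x u :=
    lineThrough_eq (t := ‖z - x‖) (by rw [← hzx]; abel)
  have hsup : LineSupports L x u := by
    constructor
    · obtain ⟨t, ht⟩ := hL
      exact ⟨_, ⟨t * ‖z - x‖, by rw [mul_smul, ← hzx]⟩, ht⟩
    · refine eq_empty_iff_forall_notMem.2 ?_
      rintro _ ⟨⟨t, rfl⟩, ht⟩
      refine hi (t * ‖z - x‖⁻¹) ?_
      rwa [mul_smul, ← hu]
  have hsup' : LineSupports L z u := by
    unfold LineSupports
    rw [hline]
    exact hsup
  rw [← hchord x hx u hu1 hsup, ← hchord z hz u hu1 hsup', hline]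

/-- A line disjoint from a compact convex set is separated from it by a functional that is constant
along the line. -/
theorem exists_separating_functional [FiniteDimensional ℝ E] {L : Set E} (hL : IsCompact L)
    (hLc : Convex ℝ L) {x y : E} (h : ∀ t : ℝ, x + t • (y - x) ∉ L) :
    ∃ f : E →L[ℝ] ℝ, (∀ l ∈ L, f l < f y) ∧ f x = f y := by
  have hmem : ∀ z ∈ line[ℝ, x, y], ∃ t : ℝ, z = x + t • (y - x) := by
    intro z hz
    obtain ⟨t, rfl⟩ := mem_affineSpan_pair_iff_exists_lineMap_eq.1 hz
    exact ⟨t, by rw [AffineMap.lineMap_apply_module']; abel⟩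
  obtain ⟨f, a, b, hfa, hab, hfb⟩ := geometric_hahn_banach_compact_closed hLc hL
    (line[ℝ, x, y]).convex (line[ℝ, x, y]).closed_of_finiteDimensional
    (disjoint_left.2 fun z hz hz' => by
      obtain ⟨t, rfl⟩ := hmem z hz'
      exact h t hz)
  refine ⟨f, fun l hl => (hfa l hl).trans (hab.trans (hfb y (right_mem_affineSpan_pair ℝ x y))), ?_⟩
  -- A nonconstant affine function on a line is unbounded below.
  by_contra hc
  have hne : f y - f x ≠ 0 := sub_ne_zero.2 (Ne.symm hc)
  have := hfb (AffineMap.lineMap x y ((b - f x) / (f y - f x)))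
    (AffineMap.lineMap_mem_affineSpan_pair _ x y)
  rw [AffineMap.lineMap_apply_module', map_add, map_smul, map_sub, smul_eq_mul,
    div_mul_cancel₀ _ hne] at this
  linarith

/-- If for every boundary point `x` of `M` all lines through `x` supporting `L` cut
chords of the same length `lam x` on `K`, then any two parallel chords of `K` whose
lines support `L` have the same length. -/
theorem stmt_4 {n : ℕ} (hn : 3 ≤ n) (K L M : Set (EuclideanSpace ℝ (Fin n)))
    (hKcpt : IsCompact K) (hKconv : Convex ℝ K) (hKint : (interior K).Nonempty)
    (hLcpt : IsCompact L) (hLconv : Convex ℝ L) (hLint : (interior L).Nonempty)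
    (hMcpt : IsCompact M) (hMconv : Convex ℝ M) (hMint : (interior M).Nonempty)
    (hLK : L ⊆ interior K) (hKM : K ⊆ interior M)
    (lam : EuclideanSpace ℝ (Fin n) → ℝ)
    (hchord : ∀ x ∈ frontier M, ∀ u : EuclideanSpace ℝ (Fin n), ‖u‖ = 1 →
      LineSupports L x u → Metric.diam (K ∩ lineThrough x u) = lam x) :
    ∀ u : EuclideanSpace ℝ (Fin n), ‖u‖ = 1 →
      ∀ a b : EuclideanSpace ℝ (Fin n), LineSupports L a u → LineSupports L b u →
        Metric.diam (K ∩ lineThrough a u) = Metric.diam (K ∩ lineThrough b u) := by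
  have hLM : L ⊆ interior M := hLK.trans (interior_subset.trans hKM)
  have hdim : 3 ≤ Module.finrank ℝ (EuclideanSpace ℝ (Fin n)) := by simpa using hn
  obtain ⟨o, ho⟩ := hLint
  obtain ⟨ρ, hρ, hball⟩ := Metric.isOpen_iff.1 isOpen_interior o ho
  obtain ⟨δ, hδ, hthick⟩ := hLcpt.exists_cthickening_subset_open isOpen_interior hLM
  have hloc : ∀ x ∈ frontier M, ∀ y ∈ frontier M, dist y x < min ρ δ → lam y = lam x := by
    intro x hx y hy hd
    rcases eq_or_ne x y with rfl | hxy
    · rfl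
    have hd1 : ‖y - x‖ < ρ := by rw [← dist_eq_norm]; exact hd.trans_le (min_le_left _ _)
    have hd2 : ‖y - x‖ < δ := by rw [← dist_eq_norm]; exact hd.trans_le (min_le_right _ _)
    -- A point of `L` on the line `xy` would lie between `x` and `y`, within `δ` of `x ∉ interior M`.
    have hmiss : ∀ t : ℝ, x + t • (y - x) ∉ L := by
      intro t ht
      obtain ⟨h0, h1⟩ := param_mem_Ioo hMconv hMcpt.isClosed hx hy (hLM ht)
      refine hx.2 (hthick (mem_cthickening_of_dist_le x _ δ L ht ?_))
      rw [dist_comm, dist_eq_norm, add_sub_cancel_left, norm_smul, Real.norm_eq_abs,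
        abs_of_pos h0]
      nlinarith [norm_nonneg (y - x)]
    obtain ⟨f, hf, hfxy⟩ := exists_separating_functional hLcpt hLconv hmiss
    have hod : o + (y - x) ∈ L := interior_subset (hball (by
      rw [mem_ball, dist_eq_norm, add_sub_cancel_left]; exact hd1))
    obtain ⟨z, hz, ⟨hx1, hx2⟩, hy1, hy2⟩ := exists_common_tangent hdim hLcpt hLconv hMcpt hMconv
      hLM hx hy hxy ho hod f hf hfxy
    rw [chord_eq hLM hchord hx hz hx1 hx2, chord_eq hLM hchord hy hz hy1 hy2]
  have hconn : IsConnected (frontier M) := isConnected_frontier_of_convex hMconv hMcpt.isBounded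
    hMint (Module.one_lt_rank_of_one_lt_finrank (by omega))
  have hconst : ∀ x ∈ frontier M, ∀ y ∈ frontier M, lam x = lam y := by
    intro x hx y hy
    have : PreconnectedSpace (frontier M) := Subtype.preconnectedSpace hconn.isPreconnected
    have hlc : IsLocallyConstant fun p : frontier M => lam p := by
      rw [IsLocallyConstant.iff_eventually_eq]
      intro p
      filter_upwards [Metric.ball_mem_nhds p (lt_min hρ hδ)] with q hq
      exact hloc p p.2 q q.2 hq
    exact hlc.apply_eq_of_preconnectedSpace ⟨x, hx⟩ ⟨y, hy⟩
  intro u hu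
  have hu0 : u ≠ 0 := by
    rintro rfl
    simp at hu
  have hend : ∀ a, LineSupports L a u →
      ∃ x ∈ frontier M, Metric.diam (K ∩ lineThrough a u) = lam x := by
    intro a ha
    obtain ⟨_, ⟨t, rfl⟩, ht⟩ := ha.1
    obtain ⟨s, -, hs⟩ := exists_frontier_on_ray hMcpt (hLM ht) hu0
    have hline : lineThrough (a + t • u + s • u) u = lineThrough a u :=
      lineThrough_eq (t := t + s) (by module)
    refine ⟨_, hs, ?_⟩
    rw [← hchord _ hs u hu (by unfold LineSupports; rw [hline]; exact ha), hline]
  intro a b ha hb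
  obtain ⟨x, hx, hax⟩ := hend a ha
  obtain ⟨y, hy, hby⟩ := hend b hb
  rw [hax, hby, hconst x hx y hy]
end
end
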